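/- arXiv:2605.23519 — 6 statements merged into one kernel-verified Lean document; each statement's English description precedes it below -/
import Mathlib

section
/- Fix m ≥ 1 and let π ∈ 𝒜_n^{(m)} with π_k = n. If k < n (i.e., the block to the right of the maximum is nonempty), then k ≤ m. Equivalently, the maximum element of π occurs either in one of the positions 1,…,m or in the final position. -/
/-- `π` avoids the pattern 132: there are no indices `i < j < k` with `π i < π k < π j`. -/
def Avoids132 {n : ℕ} (π : Equiv.Perm (Fin n)) : Prop :=
  ¬ ∃ i j k : Fin n, i < j ∧ j < k ∧ π i < π k ∧ π k < π j

/-- `π` is `m`-bounded: adjacent entries differ by at most `m`. -/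
def MBounded (m : ℕ) {n : ℕ} (π : Equiv.Perm (Fin n)) : Prop :=
  ∀ i : ℕ, ∀ h : i + 1 < n,
    |(((π ⟨i + 1, h⟩ : Fin n) : ℕ) : ℤ) - (((π ⟨i, by omega⟩ : Fin n) : ℕ) : ℤ)| ≤ (m : ℤ)

/-- `a_n^{(m)}`: the number of `m`-bounded 132-avoiding permutations of length `n`. -/
noncomputable def aCount (m n : ℕ) : ℕ :=
  Nat.card {π : Equiv.Perm (Fin n) // Avoids132 π ∧ MBounded m π}

theorem position_restriction (m : ℕ) (hm : 1 ≤ m) (n : ℕ) (π : Equiv.Perm (Fin n))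
    (hA : Avoids132 π) (hB : MBounded m π) (k : Fin n) (hk : ((π k : Fin n) : ℕ) = n - 1) :
    ((k : ℕ) + 1 < n → (k : ℕ) + 1 ≤ m) ∧ ((k : ℕ) + 1 ≤ m ∨ (k : ℕ) + 1 = n) := by
  have key : (k : ℕ) + 1 < n → (k : ℕ) + 1 ≤ m := by
    intro h
    have hb := hB k h
    set v : Fin n := π ⟨(k : ℕ) + 1, h⟩ with hv
    have hkv : v ≠ π k := by
      intro e
      have := congrArg Fin.val (π.injective e)
      simp at this
    have hkv' : (v : ℕ) ≠ (π k : ℕ) := fun e => hkv (Fin.ext e)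
    have hvn := v.isLt
    have hsub : (Finset.Iic k).image π ⊆ Finset.Ioi v := by
      intro x hx
      obtain ⟨i, hi, rfl⟩ := Finset.mem_image.1 hx
      rw [Finset.mem_Iic] at hi
      rw [Finset.mem_Ioi]
      by_contra hlt
      have hne : π i ≠ v := by
        intro e
        have h1 := congrArg Fin.val (π.injective e)
        have h2 : (i : ℕ) ≤ k := hi
        simp at h1
        omega
      have hlt' : π i < v := lt_of_le_of_ne (not_lt.1 hlt) hne
      have hik : i ≠ k := by
        rintro rfl
        have : (π i : ℕ) < v := hlt'
        omega
      refine hA ⟨i, k, ⟨(k : ℕ) + 1, h⟩, lt_of_le_of_ne hi hik, ?_, hlt', ?_⟩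
      · rw [Fin.lt_def]; simp
      · rw [Fin.lt_def, ← hv]; omega
    have hc := Finset.card_le_card hsub
    rw [Finset.card_image_of_injective _ π.injective, Fin.card_Iic, Fin.card_Ioi] at hc
    have hb2 := (abs_le.1 hb).1
    simp only [Fin.eta] at hb2
    omega
  refine ⟨key, ?_⟩
  have := k.isLt
  by_cases h : (k : ℕ) + 1 < n
  · exact Or.inl (key h)
  · right; omega
end

section
/- Fix m ≥ 1. For every n ≥ 2 and every p, q ∈ B_m, T_{p,q}^{(m)}(n) = Σ_{k=1}^{min(m,n−1)} c_{k,p} · T_{m−k, q−k}^{(m)}(n−k) + T_{p−1, m−1}^{(m)}(n−1), where ∞ − r = ∞ and any term with a negative finite threshold is interpreted as zero. In particular, for n ≥ m+1 the sum runs over 1 ≤ k ≤ m. -/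
/-- Threshold subtraction in `WithTop ℤ`: `∞ - k = ∞`. -/
def wsub (q : WithTop ℤ) (k : ℕ) : WithTop ℤ := WithTop.map (fun z => z - (k : ℤ)) q

/-- `B_m = {0, 1, …, m-1, ∞}` inside `WithTop ℤ`. -/
def Bset (m : ℕ) : Set (WithTop ℤ) :=
  {x | x = ⊤ ∨ ∃ j : ℕ, j < m ∧ x = ((j : ℤ) : WithTop ℤ)}

/-- `T_{u,v}^{(m)}(n)`: the number of `m`-bounded 132-avoiding permutations `π` of length `n`
with endpoint deficiencies `n - π₁ ≤ u` and `n - πₙ ≤ v` (entries are the 1-based values). -/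
noncomputable def Tcount (m : ℕ) (u v : WithTop ℤ) (n : ℕ) : ℕ :=
  Nat.card {π : Equiv.Perm (Fin n) // Avoids132 π ∧ MBounded m π ∧
    (∀ h : 0 < n, (((n : ℤ) - ((((π ⟨0, h⟩ : Fin n) : ℕ) : ℤ) + 1) : ℤ) : WithTop ℤ) ≤ u) ∧
    (∀ h : 0 < n, (((n : ℤ) - ((((π ⟨n - 1, by omega⟩ : Fin n) : ℕ) : ℤ) + 1) : ℤ) : WithTop ℤ) ≤ v)}

/-- `c_{k,p}`: the number of standardized left blocks, i.e. `c_{1,p} = 1` and for `k ≥ 2` the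
number of 132-avoiding `σ` of length `k-1` with `k - σ₁ ≤ p`. -/
noncomputable def ckp (k : ℕ) (p : WithTop ℤ) : ℕ :=
  if h : k ≤ 1 then 1
  else Nat.card {σ : Equiv.Perm (Fin (k - 1)) // Avoids132 σ ∧
    (((k : ℤ) - ((((σ ⟨0, by omega⟩ : Fin (k - 1)) : ℕ) : ℤ) + 1) : ℤ) : WithTop ℤ) ≤ p}


/-- Underlying function of the glued permutation `L n R`. -/
def glueFun (a b : ℕ) (σ : Equiv.Perm (Fin a)) (τ : Equiv.Perm (Fin b)) (i : Fin (a + 1 + b)) :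
    Fin (a + 1 + b) :=
  if h : i.1 < a then ⟨b + (σ ⟨i.1, h⟩).1, by have := (σ ⟨i.1, h⟩).2; omega⟩
  else if h2 : i.1 = a then ⟨a + b, by omega⟩
  else ⟨(τ ⟨i.1 - (a + 1), by have := i.2; omega⟩).1, by
    have := (τ ⟨i.1 - (a + 1), by have := i.2; omega⟩).2; omega⟩

theorem glueFun_left {a b : ℕ} (σ : Equiv.Perm (Fin a)) (τ : Equiv.Perm (Fin b))
    (i : ℕ) (hi : i < a + 1 + b) (h : i < a) :
    (glueFun a b σ τ ⟨i, hi⟩).1 = b + (σ ⟨i, h⟩).1 := by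
  simp [glueFun, h]

theorem glueFun_mid {a b : ℕ} (σ : Equiv.Perm (Fin a)) (τ : Equiv.Perm (Fin b))
    (i : ℕ) (hi : i < a + 1 + b) (h : i = a) :
    (glueFun a b σ τ ⟨i, hi⟩).1 = a + b := by
  simp [glueFun, h]

theorem glueFun_right {a b : ℕ} (σ : Equiv.Perm (Fin a)) (τ : Equiv.Perm (Fin b))
    (i : ℕ) (hi : i < a + 1 + b) (j : ℕ) (hj : j < b) (h : i = a + 1 + j) :
    (glueFun a b σ τ ⟨i, hi⟩).1 = (τ ⟨j, hj⟩).1 := by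
  subst h
  have h1 : ¬ (a + 1 + j < a) := by omega
  have h2 : ¬ (a + 1 + j = a) := by omega
  simp [glueFun, h1, h2]

theorem perm_ne {a : ℕ} (σ : Equiv.Perm (Fin a)) {i j : ℕ} (hi : i < a) (hj : j < a)
    (h : (σ ⟨i, hi⟩).1 = (σ ⟨j, hj⟩).1) : i = j := by
  have := σ.injective (Fin.ext h)
  simpa using this

theorem pos_cases {a b : ℕ} (i : ℕ) (hi : i < a + 1 + b) :
    i < a ∨ i = a ∨ ∃ j, j < b ∧ i = a + 1 + j := by
  rcases lt_trichotomy i a with h | h | h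
  · exact Or.inl h
  · exact Or.inr (Or.inl h)
  · exact Or.inr (Or.inr ⟨i - (a + 1), by omega, by omega⟩)

theorem glueFun_inj {a b : ℕ} (σ : Equiv.Perm (Fin a)) (τ : Equiv.Perm (Fin b)) :
    Function.Injective (glueFun a b σ τ) := by
  rintro ⟨i, hi⟩ ⟨j, hj⟩ h
  have h' := congrArg Fin.val h
  apply Fin.ext
  show i = j
  rcases pos_cases i hi with h1 | h1 | ⟨x, hx, h1⟩ <;>
  rcases pos_cases j hj with h2 | h2 | ⟨y, hy, h2⟩
  · rw [glueFun_left _ _ _ _ h1, glueFun_left _ _ _ _ h2] at h'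
    exact perm_ne σ h1 h2 (by omega)
  · rw [glueFun_left _ _ _ _ h1, glueFun_mid _ _ _ _ h2] at h'
    have := (σ ⟨i, h1⟩).2
    omega
  · rw [glueFun_left _ _ _ _ h1, glueFun_right _ _ _ _ _ hy h2] at h'
    have := (τ ⟨y, hy⟩).2
    omega
  · rw [glueFun_mid _ _ _ _ h1, glueFun_left _ _ _ _ h2] at h'
    have := (σ ⟨j, h2⟩).2
    omega
  · omega
  · rw [glueFun_mid _ _ _ _ h1, glueFun_right _ _ _ _ _ hy h2] at h'
    have := (τ ⟨y, hy⟩).2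
    omega
  · rw [glueFun_right _ _ _ _ _ hx h1, glueFun_left _ _ _ _ h2] at h'
    have := (τ ⟨x, hx⟩).2
    omega
  · rw [glueFun_right _ _ _ _ _ hx h1, glueFun_mid _ _ _ _ h2] at h'
    have := (τ ⟨x, hx⟩).2
    omega
  · rw [glueFun_right _ _ _ _ _ hx h1, glueFun_right _ _ _ _ _ hy h2] at h'
    have := perm_ne τ hx hy h'
    omega

/-- The glued permutation. -/
noncomputable def glue {a b : ℕ} (σ : Equiv.Perm (Fin a)) (τ : Equiv.Perm (Fin b)) :
    Equiv.Perm (Fin (a + 1 + b)) :=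
  Equiv.ofBijective (glueFun a b σ τ) (Finite.injective_iff_bijective.mp (glueFun_inj σ τ))

theorem glue_left {a b : ℕ} (σ : Equiv.Perm (Fin a)) (τ : Equiv.Perm (Fin b))
    (i : ℕ) (hi : i < a + 1 + b) (h : i < a) :
    (glue σ τ ⟨i, hi⟩).1 = b + (σ ⟨i, h⟩).1 := glueFun_left σ τ i hi h

theorem glue_mid {a b : ℕ} (σ : Equiv.Perm (Fin a)) (τ : Equiv.Perm (Fin b))
    (i : ℕ) (hi : i < a + 1 + b) (h : i = a) :
    (glue σ τ ⟨i, hi⟩).1 = a + b := glueFun_mid σ τ i hi h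

theorem glue_right {a b : ℕ} (σ : Equiv.Perm (Fin a)) (τ : Equiv.Perm (Fin b))
    (i : ℕ) (hi : i < a + 1 + b) (j : ℕ) (hj : j < b) (h : i = a + 1 + j) :
    (glue σ τ ⟨i, hi⟩).1 = (τ ⟨j, hj⟩).1 := glueFun_right σ τ i hi j hj h

theorem glue_pair_inj {a b : ℕ} {σ σ' : Equiv.Perm (Fin a)} {τ τ' : Equiv.Perm (Fin b)}
    (h : glue σ τ = glue σ' τ') : σ = σ' ∧ τ = τ' := by
  constructor
  · ext ⟨i, hi⟩
    have h1 := glue_left σ τ i (by omega) hi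
    have h2 := glue_left σ' τ' i (by omega) hi
    rw [h] at h1
    omega
  · ext ⟨i, hi⟩
    have h1 := glue_right σ τ (a + 1 + i) (by omega) i hi rfl
    have h2 := glue_right σ' τ' (a + 1 + i) (by omega) i hi rfl
    rw [h] at h1
    omega

theorem avoids_iff {n : ℕ} (π : Equiv.Perm (Fin n)) : Avoids132 π ↔
    ∀ (i j k : ℕ) (hij : i < j) (hjk : j < k) (hk : k < n),
      (π ⟨i, by omega⟩).1 < (π ⟨k, hk⟩).1 → ¬ (π ⟨k, hk⟩).1 < (π ⟨j, by omega⟩).1 := by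
  constructor
  · intro h i j k hij hjk hk h1 h2
    exact h ⟨⟨i, by omega⟩, ⟨j, by omega⟩, ⟨k, hk⟩, hij, hjk, h1, h2⟩
  · rintro h ⟨i, j, k, hij, hjk, h1, h2⟩
    exact h i.1 j.1 k.1 hij hjk k.2 h1 h2

theorem glue_avoids {a b : ℕ} (σ : Equiv.Perm (Fin a)) (τ : Equiv.Perm (Fin b)) :
    Avoids132 (glue σ τ) ↔ Avoids132 σ ∧ Avoids132 τ := by
  rw [avoids_iff, avoids_iff, avoids_iff]
  constructor
  · intro h
    constructor
    · intro i j k hij hjk hk h1 h2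
      refine h i j k hij hjk (by omega) ?_ ?_
      · rw [glue_left _ _ i _ (by omega), glue_left _ _ k _ hk]; omega
      · rw [glue_left _ _ j _ (by omega), glue_left _ _ k _ hk]; omega
    · intro i j k hij hjk hk h1 h2
      refine h (a + 1 + i) (a + 1 + j) (a + 1 + k) (by omega) (by omega) (by omega) ?_ ?_
      · rw [glue_right _ _ _ _ i (by omega) rfl, glue_right _ _ _ _ k hk rfl]; omega
      · rw [glue_right _ _ _ _ j (by omega) rfl, glue_right _ _ _ _ k hk rfl]; omega
  · rintro ⟨hs, ht⟩ i j k hij hjk hk h1 h2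
    rcases pos_cases k hk with h3 | h3 | ⟨z, hz, h3⟩
    · rw [glue_left _ _ i _ (by omega), glue_left _ _ k _ h3] at h1
      rw [glue_left _ _ j _ (by omega), glue_left _ _ k _ h3] at h2
      exact hs i j k hij hjk h3 (by omega) (by omega)
    · rw [glue_left _ _ j _ (by omega), glue_mid _ _ k _ h3] at h2
      have := (σ ⟨j, by omega⟩).2
      omega
    · rw [glue_right _ _ k _ z hz h3] at h1 h2
      have hz' := (τ ⟨z, hz⟩).2
      rcases pos_cases i (by omega : i < a + 1 + b) with h4 | h4 | ⟨x, hx, h4⟩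
      · rw [glue_left _ _ i _ h4] at h1
        omega
      · rw [glue_mid _ _ i _ h4] at h1
        omega
      · rw [glue_right _ _ i _ x hx h4] at h1
        rw [glue_right _ _ j _ (j - (a + 1)) (by omega) (by omega)] at h2
        exact ht x (j - (a + 1)) z (by omega) (by omega) hz h1 h2

theorem glue_surj {a b : ℕ} (π : Equiv.Perm (Fin (a + 1 + b))) (hav : Avoids132 π)
    (hmid : (π ⟨a, by omega⟩).1 = a + b) : ∃ σ τ, π = glue σ τ := by
  have hlt : ∀ i j : ℕ, ∀ (hi : i ≤ a) (hj : a < j) (hjn : j < a + 1 + b),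
      (π ⟨j, hjn⟩).1 < (π ⟨i, by omega⟩).1 := by
    intro i j hi hj hjn
    by_contra hcon
    have hne : (π ⟨j, hjn⟩).1 ≠ (π ⟨i, by omega⟩).1 := by
      intro h
      have := perm_ne π _ _ h
      omega
    have hne2 : (π ⟨j, hjn⟩).1 ≠ (π ⟨a, by omega⟩).1 := by
      intro h
      have := perm_ne π _ _ h
      omega
    have hb := (π ⟨j, hjn⟩).2
    rcases Nat.lt_or_ge i a with hia | hia
    · exact (avoids_iff π).1 hav i a j hia hj hjn (by omega) (by omega)
    · have : i = a := by omega
      subst this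
      omega
  have hL : ∀ i : ℕ, ∀ hi : i < a, b ≤ (π ⟨i, by omega⟩).1 ∧ (π ⟨i, by omega⟩).1 < a + b := by
    intro i hi
    constructor
    · have := Finset.card_le_card_of_injOn (s := (Finset.univ : Finset (Fin b)))
        (t := Finset.range (π ⟨i, by omega⟩).1)
        (fun x => (π ⟨a + 1 + x.1, by omega⟩).1)
        (by
          intro x _
          simpa using hlt i (a + 1 + x.1) (by omega) (by omega) (by omega))
        (by
          intro x _ y _ hxy
          have := perm_ne π _ _ hxy
          apply Fin.ext
          omega)
      simpa using this
    · have hne2 : (π ⟨i, by omega⟩).1 ≠ (π ⟨a, by omega⟩).1 := by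
        intro h
        have := perm_ne π _ _ h
        omega
      have hb := (π ⟨i, by omega⟩).2
      omega
  have hR : ∀ j : ℕ, ∀ hj : j < b, (π ⟨a + 1 + j, by omega⟩).1 < b := by
    intro j hj
    have := Finset.card_le_card_of_injOn (s := (Finset.univ : Finset (Fin (a + 1))))
        (t := Finset.Ioc (π ⟨a + 1 + j, by omega⟩).1 (a + b))
        (fun x => (π ⟨x.1, by omega⟩).1)
        (by
          intro x _
          have h1 := hlt x.1 (a + 1 + j) (by omega) (by omega) (by omega)
          have h2 := (π ⟨x.1, by omega⟩).2
          simp only [Finset.coe_Ioc, Set.mem_Ioc]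
          omega)
        (by
          intro x _ y _ hxy
          have := perm_ne π _ _ hxy
          apply Fin.ext
          omega)
    simp at this
    omega
  let f : Fin a → Fin a := fun i => ⟨(π ⟨i.1, by omega⟩).1 - b, by
    have := hL i.1 i.2; omega⟩
  let g : Fin b → Fin b := fun j => ⟨(π ⟨a + 1 + j.1, by omega⟩).1, hR j.1 j.2⟩
  have hf : Function.Injective f := by
    intro x y hxy
    have h1 := congrArg Fin.val hxy
    simp only [f] at h1
    have h2 := hL x.1 x.2
    have h3 := hL y.1 y.2
    have := perm_ne π (by omega : x.1 < a + 1 + b) (by omega : y.1 < a + 1 + b) (by omega)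
    exact Fin.ext this
  have hg : Function.Injective g := by
    intro x y hxy
    have h1 := congrArg Fin.val hxy
    simp only [g] at h1
    have := perm_ne π _ _ h1
    apply Fin.ext
    omega
  refine ⟨Equiv.ofBijective f (Finite.injective_iff_bijective.mp hf),
    Equiv.ofBijective g (Finite.injective_iff_bijective.mp hg), ?_⟩
  ext ⟨i, hi⟩
  rcases pos_cases i hi with h | h | ⟨j, hj, h⟩
  · rw [glue_left _ _ _ _ h]
    have := hL i h
    simp only [Equiv.ofBijective_apply, f]
    omega
  · rw [glue_mid _ _ _ _ h]
    subst h
    exact hmid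
  · rw [glue_right _ _ _ _ j hj h]
    subst h
    simp only [Equiv.ofBijective_apply, g]

theorem card_glue {a b : ℕ} (P : Equiv.Perm (Fin (a + 1 + b)) → Prop)
    (Q : Equiv.Perm (Fin a) → Prop) (R : Equiv.Perm (Fin b) → Prop)
    (h : ∀ σ τ, P (glue σ τ) ↔ Q σ ∧ R τ) :
    Nat.card {π : Equiv.Perm (Fin (a + 1 + b)) //
      (Avoids132 π ∧ P π) ∧ (π ⟨a, by omega⟩).1 = a + b} =
    Nat.card {σ : Equiv.Perm (Fin a) // Avoids132 σ ∧ Q σ} *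
      Nat.card {τ : Equiv.Perm (Fin b) // Avoids132 τ ∧ R τ} := by
  rw [← Nat.card_prod]
  symm
  refine Nat.card_congr (Equiv.ofBijective (fun x => ⟨glue x.1.1 x.2.1,
    ⟨(glue_avoids _ _).2 ⟨x.1.2.1, x.2.2.1⟩, (h _ _).2 ⟨x.1.2.2, x.2.2.2⟩⟩,
    glue_mid _ _ _ _ rfl⟩) ⟨?_, ?_⟩)
  · rintro ⟨⟨s, hs⟩, ⟨t, ht⟩⟩ ⟨⟨s', hs'⟩, ⟨t', ht'⟩⟩ hh
    have := glue_pair_inj (congrArg Subtype.val hh)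
    obtain ⟨h1, h2⟩ := this
    simp only at h1 h2
    subst h1 h2
    rfl
  · rintro ⟨π, ⟨hav, hP⟩, hm⟩
    obtain ⟨s, t, rfl⟩ := glue_surj π hav hm
    have h1 := (glue_avoids _ _).1 hav
    have h2 := (h _ _).1 hP
    exact ⟨⟨⟨s, h1.1, h2.1⟩, ⟨t, h1.2, h2.2⟩⟩, rfl⟩

/-- Split a count of permutations by the position of the largest entry. -/
theorem card_split {n : ℕ} (hn : 0 < n) (P : Equiv.Perm (Fin n) → Prop) :
    Nat.card {π : Equiv.Perm (Fin n) // P π} =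
    ∑ a : Fin n, Nat.card {π : Equiv.Perm (Fin n) // P π ∧ (π a).1 = n - 1} := by
  rw [← Nat.card_sigma]
  have hlt : n - 1 < n := by omega
  refine Nat.card_congr ⟨fun x => ⟨x.1.symm ⟨n - 1, hlt⟩, x.1, x.2, by simp⟩,
    fun y => ⟨y.2.1, y.2.2.1⟩, fun x => rfl, ?_⟩
  rintro ⟨a, π, h1, h2⟩
  have : π.symm ⟨n - 1, hlt⟩ = a := by
    rw [Equiv.symm_apply_eq]
    exact Fin.ext h2.symm
  subst this
  rfl

/-- The endpoint and boundedness part of the condition in `Tcount`. -/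
def TCond (m : ℕ) (u v : WithTop ℤ) (n : ℕ) (π : Equiv.Perm (Fin n)) : Prop :=
  MBounded m π ∧
    (∀ h : 0 < n, (((n : ℤ) - ((((π ⟨0, h⟩ : Fin n) : ℕ) : ℤ) + 1) : ℤ) : WithTop ℤ) ≤ u) ∧
    (∀ h : 0 < n, (((n : ℤ) - ((((π ⟨n - 1, by omega⟩ : Fin n) : ℕ) : ℤ) + 1) : ℤ) : WithTop ℤ) ≤ v)

theorem Tcount_eq (m : ℕ) (u v : WithTop ℤ) (n : ℕ) :
    Tcount m u v n = Nat.card {π : Equiv.Perm (Fin n) // Avoids132 π ∧ TCond m u v n π} := rfl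

theorem le_wsub (z : ℤ) (k : ℕ) (q : WithTop ℤ) :
    (z : WithTop ℤ) ≤ wsub q k ↔ ((z + k : ℤ) : WithTop ℤ) ≤ q := by
  induction q with
  | top => simp [wsub]
  | coe q =>
    have : wsub (q : WithTop ℤ) k = ((q - k : ℤ) : WithTop ℤ) := rfl
    rw [this, WithTop.coe_le_coe, WithTop.coe_le_coe]
    omega

theorem Bset_nonneg {m : ℕ} {p : WithTop ℤ} (hp : p ∈ Bset m) : ((0 : ℤ) : WithTop ℤ) ≤ p := by
  rcases hp with rfl | ⟨j, _, rfl⟩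
  · exact le_top
  · exact WithTop.coe_le_coe.2 (by omega)

/-- The condition on the left block. -/
def LCond (p : WithTop ℤ) (a : ℕ) (σ : Equiv.Perm (Fin a)) : Prop :=
  ∀ h : 0 < a, ((((a + 1 : ℕ) : ℤ) - ((((σ ⟨0, h⟩ : Fin a) : ℕ) : ℤ) + 1) : ℤ) : WithTop ℤ) ≤ p

theorem ckp_eq (a : ℕ) (p : WithTop ℤ) :
    ckp (a + 1) p = Nat.card {σ : Equiv.Perm (Fin a) // Avoids132 σ ∧ LCond p a σ} := by
  rcases Nat.eq_zero_or_pos a with rfl | ha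
  · have h1 : ckp (0 + 1) p = 1 := by simp [ckp]
    rw [h1]
    symm
    rw [Nat.card_eq_one_iff_unique]
    refine ⟨inferInstance, ⟨1, ?_, ?_⟩⟩
    · rintro ⟨i, _⟩
      exact i.elim0
    · intro h
      omega
  · have h1 : ¬ (a + 1 ≤ 1) := by omega
    unfold ckp
    rw [dif_neg h1]
    refine Nat.card_congr (Equiv.subtypeEquivRight fun σ => ?_)
    refine and_congr_right fun _ => ?_
    exact ⟨fun h _ => h, fun h => h ha⟩

theorem glue_mbounded {a b : ℕ} (m : ℕ) (ham : a + 1 ≤ m) (hb : 0 < b)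
    (σ : Equiv.Perm (Fin a)) (τ : Equiv.Perm (Fin b)) :
    MBounded m (glue σ τ) ↔ MBounded m τ ∧ ((a + b : ℕ) : ℤ) - ((τ ⟨0, hb⟩).1 : ℤ) ≤ m := by
  constructor
  · intro h
    constructor
    · intro i hi
      have := h (a + 1 + i) (by omega)
      rw [glue_right _ _ (a + 1 + i + 1) _ (i + 1) hi (by omega),
        glue_right _ _ (a + 1 + i) _ i (by omega) rfl] at this
      exact this
    · have := h a (by omega)
      rw [glue_right _ _ (a + 1) _ 0 hb (by omega), glue_mid _ _ a _ rfl, abs_le] at this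
      omega
  · rintro ⟨h1, h2⟩ i hi
    rcases pos_cases i (by omega : i < a + 1 + b) with h | h | ⟨j, hj, h⟩
    · rw [glue_left _ _ i _ h, abs_le]
      have hx := (σ ⟨i, h⟩).2
      rcases Nat.lt_or_ge (i + 1) a with h' | h'
      · rw [glue_left _ _ (i + 1) _ h']
        have hy := (σ ⟨i + 1, h'⟩).2
        constructor <;> omega
      · rw [glue_mid _ _ (i + 1) _ (by omega)]
        constructor <;> omega
    · rw [glue_mid _ _ i _ h, glue_right _ _ (i + 1) _ 0 hb (by omega), abs_le]
      have hx := (τ ⟨0, hb⟩).2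
      constructor <;> omega
    · rw [glue_right _ _ i _ j hj h, glue_right _ _ (i + 1) _ (j + 1) (by omega) (by omega)]
      exact h1 j (by omega)

theorem glue_mbounded_zero {a : ℕ} (m : ℕ) (ha : 0 < a)
    (σ : Equiv.Perm (Fin a)) (τ : Equiv.Perm (Fin 0)) :
    MBounded m (glue σ τ) ↔ MBounded m σ ∧
      (a : ℤ) - ((σ ⟨a - 1, by omega⟩).1 : ℤ) ≤ m := by
  constructor
  · intro h
    constructor
    · intro i hi
      have := h i (by omega)
      rw [glue_left _ _ (i + 1) _ hi, glue_left _ _ i _ (by omega)] at this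
      simpa using this
    · have := h (a - 1) (by omega)
      rw [glue_mid _ _ (a - 1 + 1) _ (by omega), glue_left _ _ (a - 1) _ (by omega), abs_le] at this
      omega
  · rintro ⟨h1, h2⟩ i hi
    rcases Nat.lt_or_ge (i + 1) a with h' | h'
    · rw [glue_left _ _ (i + 1) _ h', glue_left _ _ i _ (by omega)]
      simpa using h1 i h'
    · rw [glue_mid _ _ (i + 1) _ (by omega), glue_left _ _ i _ (by omega), abs_le]
      have : i = a - 1 := by omega
      subst this
      have hx := (σ ⟨a - 1, by omega⟩).2
      constructor <;> omega

theorem cast_le_congr {x y : ℤ} {p : WithTop ℤ} (h : x = y) :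
    (x : WithTop ℤ) ≤ p ↔ (y : WithTop ℤ) ≤ p := by rw [h]

theorem block_main (m a b : ℕ) (ham : a + 1 ≤ m) (hb : 0 < b) (p q : WithTop ℤ)
    (hp : p ∈ Bset m) (σ : Equiv.Perm (Fin a)) (τ : Equiv.Perm (Fin b)) :
    TCond m p q (a + 1 + b) (glue σ τ) ↔
    LCond p a σ ∧
      TCond m ((((m : ℤ) - ((a + 1 : ℕ) : ℤ)) : ℤ) : WithTop ℤ) (wsub q (a + 1)) b τ := by
  have e1 : (∀ h : 0 < a + 1 + b, ((((a + 1 + b : ℕ) : ℤ) -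
      ((((glue σ τ ⟨0, h⟩ : Fin (a + 1 + b)) : ℕ) : ℤ) + 1) : ℤ) : WithTop ℤ) ≤ p) ↔
      LCond p a σ := by
    rcases Nat.eq_zero_or_pos a with rfl | ha
    · constructor
      · intro _ h
        omega
      · intro _ h
        rw [glue_mid _ _ 0 _ rfl]
        refine (cast_le_congr ?_).2 (Bset_nonneg hp)
        push_cast
        ring
    · unfold LCond
      rw [forall_prop_of_true (by omega : 0 < a + 1 + b), forall_prop_of_true ha]
      apply cast_le_congr
      rw [glue_left _ _ 0 _ ha]
      push_cast
      ring
  have e2 : (∀ h : 0 < a + 1 + b, ((((a + 1 + b : ℕ) : ℤ) -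
      ((((glue σ τ ⟨a + 1 + b - 1, by omega⟩ : Fin (a + 1 + b)) : ℕ) : ℤ) + 1) : ℤ) :
        WithTop ℤ) ≤ q) ↔
      (∀ h : 0 < b, (((b : ℤ) - ((((τ ⟨b - 1, by omega⟩ : Fin b) : ℕ) : ℤ) + 1) : ℤ) :
        WithTop ℤ) ≤ wsub q (a + 1)) := by
    rw [forall_prop_of_true (by omega : 0 < a + 1 + b), forall_prop_of_true hb, le_wsub]
    apply cast_le_congr
    rw [glue_right _ _ (a + 1 + b - 1) _ (b - 1) (by omega) (by omega)]
    push_cast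
    ring
  unfold TCond
  rw [e1, e2, glue_mbounded m ham hb, forall_prop_of_true hb, forall_prop_of_true hb,
    WithTop.coe_le_coe]
  have e3 : ((a + b : ℕ) : ℤ) - ((τ ⟨0, hb⟩).1 : ℤ) ≤ m ↔
      (b : ℤ) - (((τ ⟨0, hb⟩).1 : ℤ) + 1) ≤ (m : ℤ) - ((a + 1 : ℕ) : ℤ) := by
    push_cast
    constructor <;> intro h <;> linarith
  rw [e3]
  tauto

theorem block_big (m a b : ℕ) (ham : m < a + 1) (hb : 0 < b) (p q : WithTop ℤ)
    (σ : Equiv.Perm (Fin a)) (τ : Equiv.Perm (Fin b)) :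
    TCond m p q (a + 1 + b) (glue σ τ) ↔ True ∧ False := by
  simp only [and_false, iff_false]
  rintro ⟨h, -⟩
  have := h a (by omega)
  rw [glue_right _ _ (a + 1) _ 0 hb (by omega), glue_mid _ _ a _ rfl, abs_le] at this
  have hx := (τ ⟨0, hb⟩).2
  omega

theorem block_last (m a : ℕ) (ha : 0 < a) (p q : WithTop ℤ) (hq : q ∈ Bset m)
    (σ : Equiv.Perm (Fin a)) (τ : Equiv.Perm (Fin 0)) :
    TCond m p q (a + 1 + 0) (glue σ τ) ↔
    TCond m (wsub p 1) ((((m : ℤ) - 1) : ℤ) : WithTop ℤ) a σ ∧ True := by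
  have e1 : (∀ h : 0 < a + 1 + 0, ((((a + 1 + 0 : ℕ) : ℤ) -
      ((((glue σ τ ⟨0, h⟩ : Fin (a + 1 + 0)) : ℕ) : ℤ) + 1) : ℤ) : WithTop ℤ) ≤ p) ↔
      (∀ h : 0 < a, (((a : ℤ) - ((((σ ⟨0, h⟩ : Fin a) : ℕ) : ℤ) + 1) : ℤ) :
        WithTop ℤ) ≤ wsub p 1) := by
    rw [forall_prop_of_true (by omega : 0 < a + 1 + 0), forall_prop_of_true ha, le_wsub]
    apply cast_le_congr
    rw [glue_left _ _ 0 _ ha]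
    push_cast
    ring
  have e2 : (∀ h : 0 < a + 1 + 0, ((((a + 1 + 0 : ℕ) : ℤ) -
      ((((glue σ τ ⟨a + 1 + 0 - 1, by omega⟩ : Fin (a + 1 + 0)) : ℕ) : ℤ) + 1) : ℤ) :
        WithTop ℤ) ≤ q) := by
    intro _
    rw [glue_mid _ _ (a + 1 + 0 - 1) _ (by omega)]
    refine (cast_le_congr ?_).2 (Bset_nonneg hq)
    push_cast
    ring
  unfold TCond
  rw [e1, glue_mbounded_zero m ha, forall_prop_of_true ha, forall_prop_of_true ha,
    WithTop.coe_le_coe]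
  have e3 : (a : ℤ) - ((σ ⟨a - 1, by omega⟩).1 : ℤ) ≤ m ↔
      (a : ℤ) - (((σ ⟨a - 1, by omega⟩).1 : ℤ) + 1) ≤ (m : ℤ) - 1 := by
    constructor <;> intro h <;> linarith
  rw [e3]
  tauto

theorem avoids_zero_card : Nat.card {τ : Equiv.Perm (Fin 0) // Avoids132 τ ∧ True} = 1 := by
  rw [Nat.card_eq_one_iff_unique]
  refine ⟨inferInstance, ⟨1, ?_, trivial⟩⟩
  rintro ⟨i, _⟩
  exact i.elim0

/-- Number of permutations counted by `Tcount` with the maximum at (0-based) position `a`. -/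
noncomputable def fiberCount (m : ℕ) (p q : WithTop ℤ) (n a : ℕ) : ℕ :=
  if h : a < n then Nat.card {π : Equiv.Perm (Fin n) //
    (Avoids132 π ∧ TCond m p q n π) ∧ (π ⟨a, h⟩).1 = n - 1} else 0

theorem Tcount_split (m : ℕ) (p q : WithTop ℤ) (n : ℕ) (hn : 0 < n) :
    Tcount m p q n = ∑ a ∈ Finset.range n, fiberCount m p q n a := by
  rw [Tcount_eq, card_split hn, Finset.sum_range]
  refine Finset.sum_congr rfl fun a _ => ?_
  rw [fiberCount, dif_pos a.2]

theorem fiberCount_add (m : ℕ) (p q : WithTop ℤ) (a b : ℕ) :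
    fiberCount m p q (a + 1 + b) a = Nat.card {π : Equiv.Perm (Fin (a + 1 + b)) //
      (Avoids132 π ∧ TCond m p q (a + 1 + b) π) ∧ (π ⟨a, by omega⟩).1 = a + b} := by
  rw [fiberCount, dif_pos (by omega)]
  have : a + 1 + b - 1 = a + b := by omega
  rw [this]

theorem fiber_main (m : ℕ) (p q : WithTop ℤ) (hp : p ∈ Bset m) (n a : ℕ) (ham : a + 1 ≤ m)
    (han : a + 1 < n) :
    fiberCount m p q n a = ckp (a + 1) p *
      Tcount m ((((m : ℤ) - ((a + 1 : ℕ) : ℤ)) : ℤ) : WithTop ℤ) (wsub q (a + 1))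
        (n - (a + 1)) := by
  obtain ⟨b, rfl⟩ := Nat.exists_eq_add_of_lt han
  have hb : a + 1 + b + 1 - (a + 1) = b + 1 := by omega
  rw [hb]
  change fiberCount m p q (a + 1 + (b + 1)) a = _
  rw [fiberCount_add, card_glue _ _ _ (block_main m a (b + 1) ham (by omega) p q hp), ckp_eq,
    Tcount_eq]

theorem fiber_big (m : ℕ) (p q : WithTop ℤ) (n a : ℕ) (ham : m < a + 1)
    (han : a + 1 < n) : fiberCount m p q n a = 0 := by
  obtain ⟨b, rfl⟩ := Nat.exists_eq_add_of_lt han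
  change fiberCount m p q (a + 1 + (b + 1)) a = _
  rw [fiberCount_add, card_glue _ (fun _ => True) (fun _ => False)
    (block_big m a (b + 1) ham (by omega) p q)]
  simp

theorem fiber_last (m : ℕ) (p q : WithTop ℤ) (hq : q ∈ Bset m) (a : ℕ) (ha : 0 < a) :
    fiberCount m p q (a + 1) a =
      Tcount m (wsub p 1) ((((m : ℤ) - 1) : ℤ) : WithTop ℤ) a := by
  change fiberCount m p q (a + 1 + 0) a = _
  rw [fiberCount_add, card_glue _ _ (fun _ => True) (block_last m a ha p q hq),
    avoids_zero_card, mul_one, Tcount_eq]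

theorem recursion_min (m : ℕ) (n : ℕ) (hn : 2 ≤ n)
    (p q : WithTop ℤ) (hp : p ∈ Bset m) (hq : q ∈ Bset m) :
    Tcount m p q n =
      (∑ k ∈ Finset.Icc 1 (min m (n - 1)),
        ckp k p * Tcount m ((((m : ℤ) - (k : ℤ)) : ℤ) : WithTop ℤ) (wsub q k) (n - k))
      + Tcount m (wsub p 1) ((((m : ℤ) - 1) : ℤ) : WithTop ℤ) (n - 1) := by
  obtain ⟨N, rfl⟩ : ∃ N, n = N + 1 := ⟨n - 1, by omega⟩
  rw [Tcount_split m p q (N + 1) (by omega), Finset.sum_range_succ, fiber_last m p q hq N (by omega)]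
  simp only [Nat.add_sub_cancel]
  congr 1
  have h1 : ∑ a ∈ Finset.range N, fiberCount m p q (N + 1) a =
      ∑ a ∈ Finset.range (min m N), fiberCount m p q (N + 1) a := by
    symm
    apply Finset.sum_subset
    · intro x hx
      simp only [Finset.mem_range] at *
      omega
    · intro x hx hx'
      simp only [Finset.mem_range] at *
      exact fiber_big m p q _ _ (by omega) (by omega)
  rw [h1, Finset.range_eq_Ico]
  have h2 : Finset.Icc 1 (min m N) = Finset.Ico (0 + 1) (min m N + 1) := by
    ext x
    simp only [Finset.mem_Icc, Finset.mem_Ico]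
    omega
  rw [h2, ← Finset.sum_Ico_add']
  refine Finset.sum_congr rfl fun a ha => ?_
  simp only [Finset.mem_Ico] at ha
  exact fiber_main m p q hp (N + 1) a (by omega) (by omega)

theorem finite_state_recursion (m : ℕ) (hm : 1 ≤ m) (n : ℕ) (hn : 2 ≤ n)
    (p q : WithTop ℤ) (hp : p ∈ Bset m) (hq : q ∈ Bset m) :
    Tcount m p q n =
      (∑ k ∈ Finset.Icc 1 (min m (n - 1)),
        ckp k p * Tcount m ((((m : ℤ) - (k : ℤ)) : ℤ) : WithTop ℤ) (wsub q k) (n - k))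
      + Tcount m (wsub p 1) ((((m : ℤ) - 1) : ℤ) : WithTop ℤ) (n - 1) ∧
    (m + 1 ≤ n →
      Tcount m p q n =
        (∑ k ∈ Finset.Icc 1 m,
          ckp k p * Tcount m ((((m : ℤ) - (k : ℤ)) : ℤ) : WithTop ℤ) (wsub q k) (n - k))
        + Tcount m (wsub p 1) ((((m : ℤ) - 1) : ℤ) : WithTop ℤ) (n - 1)) := by
  have h := recursion_min m n hn p q hp hq
  refine ⟨h, fun hmn => ?_⟩
  have hmin : min m (n - 1) = m := by omega
  rw [hmin] at h
  exact h
end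

section
/- For every fixed m ≥ 1, the ordinary generating function A^{(m)}(x) = Σ_{n≥0} a_n^{(m)} x^n is a rational function of x: there exist polynomials P(x), Q(x) with rational coefficients and Q(0) ≠ 0 such that Q(x) · Σ_{n≥0} a_n^{(m)} x^n = P(x) as formal power series over ℚ. -/
/-- The ordinary generating function `A^{(m)}(x) = Σ a_n^{(m)} x^n` over `ℚ`. -/
noncomputable def Aps (m : ℕ) : PowerSeries ℚ := PowerSeries.mk (fun n => (aCount m n : ℚ))

/-- List version of 132-avoidance. -/
def Avl : List ℕ → Prop
  | [] => True
  | a :: w => w.Pairwise (fun b c => ¬ (a < c ∧ c < b)) ∧ Avl w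

theorem avl_iff (w : List ℕ) : Avl w ↔ ∀ (i j k : ℕ) (hi : i < j) (hj : j < k)
    (hk : k < w.length), ¬ (w[i] < w[k] ∧ w[k] < w[j]) := by
  induction w with
  | nil => simp [Avl]
  | cons a w ih =>
    rw [Avl, ih, List.pairwise_iff_getElem]
    constructor
    · rintro ⟨h1, h2⟩ i j k hi hj hk
      obtain ⟨j, rfl⟩ : ∃ j', j = j' + 1 := ⟨j - 1, by omega⟩
      obtain ⟨k, rfl⟩ : ∃ j', k = j' + 1 := ⟨k - 1, by omega⟩
      simp only [List.length_cons] at hk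
      rcases i with _ | i
      · simpa using h1 j k (by omega) (by omega) (by omega)
      · simpa using h2 i j k (by omega) (by omega) (by omega)
    · intro h
      constructor
      · intro j k hj hk hjk
        exact h 0 (j+1) (k+1) (by omega) (by omega) (by simp; omega)
      · intro i j k hi hj hk
        exact h (i+1) (j+1) (k+1) (by omega) (by omega) (by simp; omega)

theorem avl_map (s : ℕ) (w : List ℕ) : Avl (w.map (· + s)) ↔ Avl w := by
  induction w with
  | nil => simp [Avl]
  | cons a w ih => simp [Avl, ih, List.pairwise_map]

theorem avl_append (L R : List ℕ) (n : ℕ) (hL : ∀ a ∈ L, a < n) (hR : ∀ a ∈ R, a < n) :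
    Avl (L ++ n :: R) ↔ Avl L ∧ Avl R ∧ ∀ a ∈ L, ∀ c ∈ R, c ≤ a := by
  induction L with
  | nil =>
    simp only [List.nil_append, Avl, List.not_mem_nil, true_and]
    constructor
    · rintro ⟨_, h⟩; simpa using h
    · rintro ⟨h, _⟩
      refine ⟨List.Pairwise.imp_of_mem (R := fun _ _ => True) ?_ (by simp [List.pairwise_iff_getElem]), h⟩
      intro a b ha hb _ hh
      have := hR b hb
      omega
  | cons a L ih =>
    rw [List.cons_append, Avl, ih (fun x hx => hL x (by simp [hx])), Avl,
      List.pairwise_append, List.pairwise_cons]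
    have hT : ∀ P : ℕ → ℕ → Prop, (∀ x ∈ R, ∀ y ∈ R, P x y) → R.Pairwise P := by
      intro P hP
      exact List.Pairwise.imp_of_mem (R := fun _ _ => True) (fun hx hy _ => hP _ hx _ hy)
        (by simp [List.pairwise_iff_getElem])
    have han := hL a (by simp)
    constructor
    · rintro ⟨⟨h1, ⟨h2, h3⟩, h4⟩, h5, h6, h7⟩
      refine ⟨⟨h1, h5⟩, h6, ?_⟩
      intro x hx c hc
      rcases List.mem_cons.1 hx with rfl | hx
      · have := h2 c hc; have := hR c hc; omega
      · exact h7 x hx c hc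
    · rintro ⟨⟨h1, h5⟩, h6, h7⟩
      have h8 : ∀ c ∈ R, c ≤ a := h7 a (by simp)
      refine ⟨⟨h1, ⟨?_, ?_⟩, ?_⟩, h5, h6, fun x hx => h7 x (by simp [hx])⟩
      · intro c hc; have := h8 c hc; omega
      · apply hT; intro x hx y hy; have := h8 y hy; omega
      · intro x hx y hy
        have := hL x (by simp [hx])
        rcases List.mem_cons.1 hy with rfl | hy
        · omega
        · have := h8 y hy; omega

/-- List version of permutation of `0..n-1`. -/
def IsP (n : ℕ) (w : List ℕ) : Prop := w.length = n ∧ w.Nodup ∧ ∀ x, x ∈ w ↔ x < n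

/-- adjacency -/
def Adj (m a b : ℕ) : Prop := a ≤ b + m ∧ b ≤ a + m

theorem perm_card (m n : ℕ) : aCount m n =
    Nat.card {w : List ℕ // IsP n w ∧ Avl w ∧ w.IsChain (Adj m)} := by
  unfold aCount
  have key : ∀ π : Equiv.Perm (Fin n),
      ((Avoids132 π ∧ MBounded m π) ↔ (Avl (List.ofFn fun i => (π i : ℕ)) ∧
        (List.ofFn fun i => (π i : ℕ)).IsChain (Adj m))) := by
    intro π
    refine and_congr ?_ ?_
    · rw [avl_iff, Avoids132]
      constructor
      · intro h i j k hi hj hk hh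
        simp only [List.length_ofFn] at hk
        simp only [List.getElem_ofFn, Fin.val_fin_lt] at hh
        exact h ⟨_, _, _, by simpa using hi, by simpa using hj, hh⟩
      · rintro h ⟨i, j, k, hi, hj, hh⟩
        exact h i j k hi hj (by simp) (by simpa using hh)
    · rw [List.isChain_iff_getElem, MBounded]
      constructor
      · intro h i hi
        simp only [List.length_ofFn] at hi
        have := abs_le.1 (h i hi)
        simp only [List.getElem_ofFn, Adj]
        omega
      · intro h i hi
        have := h i (by simpa using hi)
        simp only [List.getElem_ofFn, Adj] at this
        rw [abs_le]
        omega
  have hP : ∀ π : Equiv.Perm (Fin n), IsP n (List.ofFn fun i => (π i : ℕ)) := by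
    intro π
    refine ⟨by simp, ?_, ?_⟩
    · rw [List.nodup_ofFn]
      intro a b hab
      exact π.injective (Fin.ext hab)
    · intro x
      rw [List.mem_ofFn]
      constructor
      · rintro ⟨i, rfl⟩; exact (π i).2
      · intro hx; exact ⟨π.symm ⟨x, hx⟩, by simp⟩
  refine Nat.card_congr (Equiv.ofBijective
    (fun π => ⟨List.ofFn fun i => (π.1 i : ℕ), hP π.1, (key π.1).1 π.2⟩) ⟨?_, ?_⟩)
  · intro a b hab
    have h1 := List.ofFn_injective (Subtype.ext_iff.1 hab)
    apply Subtype.ext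
    ext i
    exact congrFun h1 i
  · rintro ⟨w, ⟨hl, hn, hw⟩, h1⟩
    subst hl
    let f : Fin w.length → Fin w.length := fun i => ⟨w[i], (hw _).1 (List.getElem_mem _)⟩
    have hf : Function.Injective f := by
      intro a b hab
      have := congrArg Fin.val hab
      exact Fin.ext ((List.Nodup.getElem_inj_iff hn).1 this)
    have hfe : List.ofFn (fun i => ((Equiv.ofBijective f (Finite.injective_iff_bijective.1 hf)) i : ℕ)) = w := by
      simp [f]
    refine ⟨⟨Equiv.ofBijective f (Finite.injective_iff_bijective.1 hf), ?_⟩, ?_⟩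
    · rw [key, hfe]; exact h1
    · exact Subtype.ext hfe

open BinaryTree in
/-- word of a tree -/
def tw : BinaryTree Unit → List ℕ
  | nil => []
  | node _ l r => (tw l).map (· + r.numNodes) ++ (l.numNodes + r.numNodes) :: tw r

open BinaryTree in
/-- distance of the first entry from the top -/
def tF : BinaryTree Unit → ℕ
  | nil => 0
  | node _ l _ => tF l + 1

open BinaryTree in
/-- distance of the last entry from the top -/
def tG : BinaryTree Unit → ℕ
  | nil => 0
  | node _ l r => if r = nil then 1 else l.numNodes + 1 + tG r

open BinaryTree in
/-- boundedness -/
def tB (m : ℕ) : BinaryTree Unit → Prop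
  | nil => True
  | node _ l r => tB m l ∧ tB m r ∧ tG l ≤ m ∧ (r ≠ nil → l.numNodes + tF r ≤ m)

open BinaryTree

theorem tF_le (t : BinaryTree Unit) : tF t ≤ t.numNodes := by
  induction t with
  | nil => simp [tF]
  | node _ l r h1 h2 => simp [tF]; omega

theorem tG_le (t : BinaryTree Unit) : tG t ≤ t.numNodes := by
  induction t with
  | nil => simp [tG]
  | node _ l r h1 h2 => simp only [tG, numNodes]; split_ifs <;> omega

theorem tw_isP (t : BinaryTree Unit) : IsP t.numNodes (tw t) := by
  induction t with
  | nil => simp [tw, IsP]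
  | node _ l r h1 h2 =>
    obtain ⟨a1, a2, a3⟩ := h1
    obtain ⟨b1, b2, b3⟩ := h2
    refine ⟨by simp [tw, a1, b1]; omega, ?_, ?_⟩
    · rw [tw, List.nodup_append, List.nodup_cons]
      refine ⟨a2.map (by intro x y; simp), ⟨by simp [b3], b2⟩, ?_⟩
      simp only [List.mem_map, List.mem_cons, a3, b3]
      rintro _ ⟨x, hx, rfl⟩ y hy
      omega
    · intro x
      simp only [tw, List.mem_append, List.mem_map, List.mem_cons, a3, b3, numNodes]
      constructor
      · rintro (⟨x, hx, rfl⟩ | h) <;> omega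
      · intro h
        by_cases h1 : x < r.numNodes
        · omega
        · by_cases h2 : x = l.numNodes + r.numNodes
          · omega
          · left; exact ⟨x - r.numNodes, by omega, by omega⟩

theorem tw_avl (t : BinaryTree Unit) : Avl (tw t) := by
  induction t with
  | nil => simp [tw, Avl]
  | node _ l r h1 h2 =>
    have hl := (tw_isP l).2.2
    have hr := (tw_isP r).2.2
    rw [tw, avl_append, avl_map]
    · refine ⟨h1, h2, ?_⟩
      simp only [List.mem_map, hr]
      rintro _ ⟨x, hx, rfl⟩ y hy
      omega
    · simp only [List.mem_map, hl]
      rintro _ ⟨x, hx, rfl⟩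
      omega
    · intro a ha
      have := (hr a).1 ha
      omega

theorem tw_inj : ∀ s t : BinaryTree Unit, tw s = tw t → s = t := by
  intro s
  induction s with
  | nil => intro t h; cases t with
    | nil => rfl
    | node _ l r => simp [tw] at h
  | node _ l r h1 h2 =>
    intro t h
    cases t with
    | nil => simp [tw] at h
    | node _ l' r' =>
      have hn : (node () l r).numNodes = (node () l' r').numNodes := by
        rw [← (tw_isP (node () l r)).1, ← (tw_isP (node () l' r')).1]
        exact congrArg List.length h
      simp only [numNodes] at hn
      rw [tw, tw, List.append_cons_inj_of_notMem] at h
      · obtain ⟨e1, e2, e3⟩ := h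
        have e4 := h2 _ e3
        subst e4
        have e5 := List.map_injective_iff.2 (add_left_injective _) e1
        rw [h1 _ e5]
      · simp only [List.mem_map, (tw_isP l).2.2]
        rintro ⟨x, hx, hh⟩
        omega
      · rw [(tw_isP r).2.2]; omega

theorem lower_aux (R : List ℕ) (hn : R.Nodup) (h : ∀ c ∈ R, ∀ y < c, y ∈ R) :
    IsP R.length R := by
  refine ⟨rfl, hn, ?_⟩
  have hc : R.toFinset.card = R.length := List.toFinset_card_of_nodup hn
  have hs : R.toFinset ⊆ Finset.range R.length := by
    intro x hx
    have : Finset.range (x+1) ⊆ R.toFinset := by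
      intro y hy
      simp only [Finset.mem_range] at hy
      simp only [List.mem_toFinset] at hx ⊢
      rcases Nat.lt_or_ge y x with h3 | h3
      · exact h x hx y h3
      · obtain rfl : y = x := by omega
        exact hx
    have := Finset.card_le_card this
    simp only [Finset.card_range] at this
    simp only [Finset.mem_range]; omega
  have he := Finset.eq_of_subset_of_card_le hs (by simp [hc])
  intro x
  have := Finset.ext_iff.1 he x
  simpa using this

theorem tw_surj : ∀ (n : ℕ) (w : List ℕ), IsP n w → Avl w → ∃ t, tw t = w := by
  intro n
  induction n using Nat.strong_induction_on with
  | _ n ih =>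
  intro w hw ha
  rcases n with _ | n
  · exact ⟨nil, by simp [tw, List.length_eq_zero_iff.1 hw.1]⟩
  · obtain ⟨h1, h2, h3⟩ := hw
    obtain ⟨L, R, rfl⟩ := List.append_of_mem ((h3 n).2 (by omega))
    rw [List.nodup_append, List.nodup_cons] at h2
    obtain ⟨n1, ⟨n2, n3⟩, n4⟩ := h2
    simp only [List.mem_append, List.mem_cons] at h3
    have hL : ∀ a ∈ L, a < n := by
      intro a haL
      have := (h3 a).1 (Or.inl haL)
      have := n4 a haL n (by simp)
      omega
    have hR : ∀ a ∈ R, a < n := by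
      intro a haR
      have := (h3 a).1 (Or.inr (Or.inr haR))
      have : a ≠ n := fun h => n2 (h ▸ haR)
      omega
    rw [avl_append _ _ _ hL hR] at ha
    obtain ⟨a1, a2, a3⟩ := ha
    have hRP : IsP R.length R := by
      apply lower_aux R n3
      intro c hc y hy
      have hcn := hR c hc
      rcases (h3 y).2 (by omega) with h | h | h
      · have := a3 y h c hc; omega
      · omega
      · exact h
    simp only [List.length_append, List.length_cons] at h1
    have hge : ∀ a ∈ L, R.length ≤ a := by
      intro a haL
      by_contra hlt
      exact n4 a haL a (List.mem_cons_of_mem _ ((hRP.2.2 a).2 (by omega))) rfl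
    have hLm : (L.map (· - R.length)).map (· + R.length) = L := by
      rw [List.map_map]
      conv_rhs => rw [← List.map_id L]
      apply List.map_congr_left
      intro a haL
      have := hge a haL
      simp; omega
    obtain ⟨r, hr⟩ := ih R.length (by omega) R hRP a2
    obtain ⟨l, hl⟩ := ih L.length (by omega) (L.map (· - R.length)) (by
      refine ⟨by simp, ?_, ?_⟩
      · apply List.Nodup.of_map (· + R.length)
        rw [hLm]; exact n1
      · intro x
        have e1 : x ∈ L.map (· - R.length) ↔ x + R.length ∈ L := by
          rw [List.mem_map]
          constructor
          · rintro ⟨a, haL, rfl⟩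
            have := hge a haL
            rwa [Nat.sub_add_cancel this]
          · intro h; exact ⟨_, h, by simp⟩
        rw [e1]
        constructor
        · intro h; have := hL _ h; omega
        · intro h
          rcases (h3 (x + R.length)).2 (by omega) with h' | h' | h'
          · exact h'
          · omega
          · have := (hRP.2.2 _).1 h'; omega) (by rw [← avl_map R.length, hLm]; exact a1)
    have hln : l.numNodes = L.length := by rw [← (tw_isP l).1, hl]; simp
    have hrn : r.numNodes = R.length := by rw [← (tw_isP r).1, hr]
    refine ⟨node () l r, ?_⟩
    rw [tw, hl, hr, hln, hrn, hLm]
    congr 2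
    omega

theorem tw_head (t : BinaryTree Unit) (a : ℕ) :
    a ∈ (tw t).head? → t ≠ nil ∧ a + tF t = t.numNodes := by
  induction t generalizing a with
  | nil => simp [tw]
  | node _ l r h1 h2 =>
    intro h
    refine ⟨by simp, ?_⟩
    rw [tw, List.head?_append, List.head?_map] at h
    simp only [tF, numNodes]
    rcases hh : (tw l).head? with _ | x
    · rw [hh] at h
      have : tw l = [] := List.head?_eq_none_iff.1 hh
      have : l = nil := tw_inj l nil (by simpa [tw] using this)
      subst this
      simp at h
      simp [tF]; omega
    · rw [hh] at h
      simp at h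
      have := (h1 x (by simp [hh])).2
      omega

theorem tw_last (t : BinaryTree Unit) (a : ℕ) :
    a ∈ (tw t).getLast? → t ≠ nil ∧ a + tG t = t.numNodes := by
  induction t generalizing a with
  | nil => simp [tw]
  | node _ l r h1 h2 =>
    intro h
    refine ⟨by simp, ?_⟩
    rw [tw, List.getLast?_append, List.getLast?_cons] at h
    simp only [tG, numNodes]
    rcases hh : (tw r).getLast? with _ | x
    · rw [hh] at h
      have : tw r = [] := List.getLast?_eq_none_iff.1 hh
      have : r = nil := tw_inj r nil (by simpa [tw] using this)
      subst this
      simp at h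
      simp; omega
    · rw [hh] at h
      simp at h
      have := (h2 x (by simp [hh]))
      rw [if_neg this.1]
      omega

theorem tw_chain (m : ℕ) (t : BinaryTree Unit) : (tw t).IsChain (Adj m) ↔ tB m t := by
  induction t with
  | nil => simp [tw, tB]
  | node _ l r h1 h2 =>
    have e : ((tw l).map (· + r.numNodes)).IsChain (Adj m) ↔ (tw l).IsChain (Adj m) := by
      rw [List.isChain_map]
      have : (fun a b => Adj m (a + r.numNodes) (b + r.numNodes)) = Adj m := by
        funext a b
        simp only [Adj, eq_iff_iff]
        omega
      rw [this]
    rw [tw, List.isChain_append, e, List.isChain_cons, tB, h1, h2]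
    have c1 : (∀ y ∈ (tw r).head?, Adj m (l.numNodes + r.numNodes) y) ↔
        (r ≠ nil → l.numNodes + tF r ≤ m) := by
      rcases hh : (tw r).head? with _ | x
      · have : tw r = [] := List.head?_eq_none_iff.1 hh
        have : r = nil := tw_inj r nil (by simpa [tw] using this)
        simp [this]
      · have := tw_head r x (by simp [hh])
        simp [this.1, Adj]; omega
    have c2 : (∀ x ∈ ((tw l).map (· + r.numNodes)).getLast?,
        ∀ y ∈ ((l.numNodes + r.numNodes) :: tw r).head?, Adj m x y) ↔ tG l ≤ m := by
      rw [List.getLast?_map]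
      rcases hh : (tw l).getLast? with _ | x
      · have : tw l = [] := List.getLast?_eq_none_iff.1 hh
        have : l = nil := tw_inj l nil (by simpa [tw] using this)
        simp [this, tG]
      · have := tw_last l x (by simp [hh])
        simp [Adj]; omega
    rw [c1, c2]
    tauto

open Classical in
theorem aCount_eq (m n : ℕ) :
    aCount m n = ((treesOfNumNodesEq n).filter (tB m)).card := by
  rw [perm_card, ← Nat.card_eq_finsetCard]
  symm
  have hm : ∀ t, t ∈ (treesOfNumNodesEq n).filter (tB m) ↔ t.numNodes = n ∧ tB m t := by
    intro t; simp [mem_treesOfNumNodesEq]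
  refine Nat.card_congr (Equiv.ofBijective (fun t => ⟨tw t.1, ?_, tw_avl t.1, ?_⟩) ⟨?_, ?_⟩)
  · have := tw_isP t.1
    rwa [((hm _).1 t.2).1] at this
  · exact (tw_chain m t.1).2 ((hm _).1 t.2).2
  · intro a b hab
    exact Subtype.ext (tw_inj _ _ (Subtype.ext_iff.1 hab))
  · rintro ⟨w, h1, h2, h3⟩
    obtain ⟨t, rfl⟩ := tw_surj n w h1 h2
    refine ⟨⟨t, (hm t).2 ⟨?_, (tw_chain m t).1 h3⟩⟩, rfl⟩
    rw [← (tw_isP t).1, h1.1]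

theorem linear_system {S : Type} [Fintype S] [DecidableEq S]
    (M : Matrix S S (Polynomial ℚ)) (b : S → Polynomial ℚ) (A : S → PowerSeries ℚ)
    (h : ∀ s, A s = (b s : PowerSeries ℚ) +
      PowerSeries.X * ∑ s', (M s s' : PowerSeries ℚ) * A s') :
    ∃ Q : Polynomial ℚ, Q.coeff 0 ≠ 0 ∧ ∃ P : S → Polynomial ℚ,
      ∀ s, (Q : PowerSeries ℚ) * A s = (P s : PowerSeries ℚ) := by
  let N : Matrix S S (Polynomial ℚ) := 1 - (Polynomial.X : Polynomial ℚ) • M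
  let φ : Polynomial ℚ →+* PowerSeries ℚ := Polynomial.coeToPowerSeries.ringHom
  have hφ : ∀ p : Polynomial ℚ, φ p = (p : PowerSeries ℚ) := fun _ => rfl
  have hN : (N.map φ).mulVec A = fun s => φ (b s) := by
    funext s
    have h1 : N.map φ = 1 - (PowerSeries.X : PowerSeries ℚ) • (M.map φ) := by
      ext1 i j
      simp only [N, Matrix.map_apply, Matrix.sub_apply, Matrix.smul_apply, map_sub, smul_eq_mul,
        map_mul, Matrix.one_apply]
      split_ifs <;> simp [hφ]
    rw [h1, Matrix.sub_mulVec, Matrix.one_mulVec, Matrix.smul_mulVec]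
    simp only [Pi.sub_apply, Pi.smul_apply, smul_eq_mul, Matrix.mulVec, dotProduct,
      Matrix.map_apply, hφ]
    rw [sub_eq_iff_eq_add]
    exact h s
  refine ⟨N.det, ?_, fun s => N.adjugate.mulVec b s, ?_⟩
  · have : N.det.coeff 0 = 1 := by
      rw [Polynomial.coeff_zero_eq_eval_zero, ← Polynomial.coe_evalRingHom, RingHom.map_det]
      have : (Polynomial.evalRingHom (0:ℚ)).mapMatrix N = 1 := by
        ext1 i j
        simp only [N, RingHom.mapMatrix_apply, Matrix.map_apply, Matrix.sub_apply,
          Matrix.smul_apply, map_sub, smul_eq_mul, map_mul, Matrix.one_apply]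
        split_ifs <;> simp
      rw [this, Matrix.det_one]
    rw [this]; exact one_ne_zero
  · intro s
    have h2 : (N.adjugate.map φ).mulVec ((N.map φ).mulVec A) = (φ N.det) • A := by
      rw [Matrix.mulVec_mulVec, ← Matrix.map_mul, Matrix.adjugate_mul]
      have : (N.det • (1 : Matrix S S (Polynomial ℚ))).map φ
          = φ N.det • (1 : Matrix S S (PowerSeries ℚ)) := by
        ext1 i j
        simp only [Matrix.map_apply, Matrix.smul_apply, smul_eq_mul, map_mul, Matrix.one_apply]
        split_ifs <;> simp
      rw [this, Matrix.smul_mulVec, Matrix.one_mulVec]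
    rw [hN] at h2
    have h3 := congrFun h2 s
    rw [Pi.smul_apply, smul_eq_mul, hφ] at h3
    rw [← h3, ← hφ]
    simp [Matrix.mulVec, dotProduct, map_sum, map_mul]

/-- truncation -/
def tr (m x : ℕ) : Fin (m + 2) := ⟨min x (m + 1), by omega⟩

/-- state of a tree -/
def tst (m : ℕ) (t : BinaryTree Unit) : Fin (m + 2) × Fin (m + 2) := (tr m (tF t), tr m (tG t))

open Classical in
/-- number of bounded trees in a given state -/
noncomputable def cnt (m : ℕ) (s : Fin (m + 2) × Fin (m + 2)) (n : ℕ) : ℚ :=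
  ∑ t ∈ treesOfNumNodesEq n, if tB m t ∧ tst m t = s then 1 else 0

open Classical in
/-- transition weight -/
noncomputable def kap (m i : ℕ) (s s1 s2 : Fin (m + 2) × Fin (m + 2)) : ℚ :=
  if (s1.2 : ℕ) ≤ m ∧ ((s2.2 : ℕ) ≠ 0 → i + s2.1 ≤ m) ∧
    (tr m (s1.1 + 1), if (s2.2 : ℕ) = 0 then tr m 1 else tr m (i + 1 + s2.2)) = s then 1 else 0

theorem tG_zero (t : BinaryTree Unit) : tG t = 0 ↔ t = nil := by
  cases t with
  | nil => simp [tG]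
  | node _ l r => simp only [tG]; split_ifs <;> simp

theorem tst_zero (m : ℕ) (t : BinaryTree Unit) : ((tst m t).2 : ℕ) = 0 ↔ t = nil := by
  rw [← tG_zero]; simp only [tst, tr]; omega

theorem node_cond (m : ℕ) (s : Fin (m + 2) × Fin (m + 2)) (l r : BinaryTree Unit) :
    (tB m (node () l r) ∧ tst m (node () l r) = s) ↔ tB m l ∧ tB m r ∧
      (((tst m l).2 : ℕ) ≤ m ∧ (((tst m r).2 : ℕ) ≠ 0 → l.numNodes + (tst m r).1 ≤ m) ∧
    (tr m ((tst m l).1 + 1), if ((tst m r).2 : ℕ) = 0 then tr m 1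
      else tr m (l.numNodes + 1 + (tst m r).2)) = s) := by
  have e : tst m (node () l r) = (tr m ((tst m l).1 + 1), if ((tst m r).2 : ℕ) = 0 then tr m 1
      else tr m (l.numNodes + 1 + (tst m r).2)) := by
    simp only [tst_zero]
    simp only [tst, tF, tG]
    refine Prod.ext ?_ ?_
    · simp only [tr, Fin.mk.injEq]; omega
    · split_ifs
      · rfl
      · simp only [tr, Fin.mk.injEq]; omega
  rw [← e, tB]
  simp only [tst_zero, ne_eq]
  have e1 : ((tst m l).2 : ℕ) ≤ m ↔ tG l ≤ m := by simp only [tst, tr]; omega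
  have e2 : l.numNodes + ((tst m r).1 : ℕ) ≤ m ↔ l.numNodes + tF r ≤ m := by
    simp only [tst, tr]; omega
  rw [e1, e2]
  tauto

theorem sum_trees_succ (n : ℕ) (g : BinaryTree Unit → ℚ) :
    ∑ t ∈ treesOfNumNodesEq (n + 1), g t = ∑ ij ∈ Finset.HasAntidiagonal.antidiagonal n,
      ∑ l ∈ treesOfNumNodesEq ij.1, ∑ r ∈ treesOfNumNodesEq ij.2, g (node () l r) := by
  rw [treesOfNumNodesEq_succ, Finset.sum_biUnion]
  · apply Finset.sum_congr rfl
    rintro ⟨i, j⟩ H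
    rw [pairwiseNode, Finset.sum_map, Finset.sum_product]
    rfl
  · simp_rw [Set.PairwiseDisjoint, Set.Pairwise, Finset.disjoint_left]
    aesop

theorem cnt_succ (m n : ℕ) (s : Fin (m + 2) × Fin (m + 2)) :
    cnt m s (n + 1) = ∑ ij ∈ Finset.HasAntidiagonal.antidiagonal n, ∑ s2, (∑ s1, kap m ij.1 s s1 s2 *
      cnt m s1 ij.1) * cnt m s2 ij.2 := by
  classical
  rw [cnt, sum_trees_succ]
  apply Finset.sum_congr rfl
  rintro ⟨i, j⟩ -
  simp only [cnt, Finset.mul_sum, Finset.sum_mul]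
  -- swap sums
  have h : ∀ l ∈ treesOfNumNodesEq i, ∀ r ∈ treesOfNumNodesEq j,
      (if tB m (node () l r) ∧ tst m (node () l r) = s then (1:ℚ) else 0) =
      ∑ s2, ∑ s1, kap m i s s1 s2 * (if tB m l ∧ tst m l = s1 then 1 else 0) *
        (if tB m r ∧ tst m r = s2 then 1 else 0) := by
    intro l hl r hr
    rw [mem_treesOfNumNodesEq] at hl
    rw [Finset.sum_eq_single (tst m r), Finset.sum_eq_single (tst m l)]
    · simp only [node_cond, kap, hl]
      by_cases h1 : tB m l <;> by_cases h2 : tB m r <;> simp [h1, h2]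
    · intro b _ hb; rw [if_neg (c := _ ∧ tst m l = b) (fun h => hb h.2.symm)]; simp
    · simp
    · intro b _ hb
      apply Finset.sum_eq_zero
      intro x _
      rw [if_neg (c := _ ∧ tst m r = b) (fun h => hb h.2.symm)]; simp
    · simp
  rw [Finset.sum_congr rfl (fun l hl => Finset.sum_congr rfl (fun r hr => h l hl r hr))]
  calc _ = ∑ l ∈ treesOfNumNodesEq i, ∑ s2, ∑ r ∈ treesOfNumNodesEq j, ∑ s1, _ :=
        Finset.sum_congr rfl (fun l _ => Finset.sum_comm)
    _ = ∑ s2, ∑ l ∈ treesOfNumNodesEq i, ∑ r ∈ treesOfNumNodesEq j, ∑ s1, _ := Finset.sum_comm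
    _ = _ := by
      apply Finset.sum_congr rfl
      intro s2 _
      rw [Finset.sum_comm]
      apply Finset.sum_congr rfl
      intro r _
      rw [Finset.sum_comm]

theorem cnt_zero_state (m n : ℕ) (s : Fin (m + 2) × Fin (m + 2)) (hs : (s.2 : ℕ) = 0) :
    cnt m s n = if n = 0 ∧ s = (0, 0) then 1 else 0 := by
  classical
  rw [cnt]
  rcases n with _ | n
  · simp only [treesOfNumNodesEq_zero, Finset.sum_singleton, true_and, tB]
    have : tst m nil = (0, 0) := by simp [tst, tr, tF, tG]
    rw [this]
    simp [eq_comm]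
  · simp only [Nat.add_eq_zero_iff, one_ne_zero, and_false, false_and, if_false]
    apply Finset.sum_eq_zero
    intro t ht
    rw [if_neg]
    rintro ⟨_, rfl⟩
    rw [tst_zero] at hs
    rw [mem_treesOfNumNodesEq, hs] at ht
    simp at ht

theorem cnt_system (m : ℕ) (s : Fin (m + 2) × Fin (m + 2)) :
    PowerSeries.mk (cnt m s) = ((Polynomial.C (cnt m s 0) : Polynomial ℚ) : PowerSeries ℚ) +
      PowerSeries.X * ∑ s2, (((if (s2.2 : ℕ) = 0 then 0 else
        ∑ i ∈ Finset.range (m + 1), Polynomial.monomial i (∑ s1, kap m i s s1 s2 * cnt m s1 i))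
        + Polynomial.C (kap m 0 s s2 (0, 0)) : Polynomial ℚ) : PowerSeries ℚ) *
          PowerSeries.mk (cnt m s2) := by
  ext n
  rcases n with _ | n
  · simp
  · rw [map_add, PowerSeries.coeff_succ_X_mul, PowerSeries.coeff_mk, cnt_succ]
    simp only [Polynomial.coe_C, PowerSeries.coeff_C, Nat.add_eq_zero_iff, one_ne_zero, and_false,
      if_false, zero_add, map_sum, Polynomial.coe_add, add_mul, map_add, Finset.sum_add_distrib,
      PowerSeries.coeff_C_mul, PowerSeries.coeff_mk]
    rw [Finset.sum_comm]
    have hsplit : ∀ f : Fin (m + 2) × Fin (m + 2) → ℚ, ∑ s2, f s2 =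
        ∑ s2, (if (s2.2 : ℕ) = 0 then 0 else f s2) + ∑ s2, (if (s2.2 : ℕ) = 0 then f s2 else 0) := by
      intro f
      rw [← Finset.sum_add_distrib]
      apply Finset.sum_congr rfl
      intro x _
      split_ifs <;> simp
    rw [hsplit]
    congr 1
    · apply Finset.sum_congr rfl
      intro s2 _
      split_ifs with h
      · simp
      · rw [PowerSeries.coeff_mul]
        apply Finset.sum_congr rfl
        rintro ⟨i, j⟩ -
        rw [PowerSeries.coeff_mk, Polynomial.coeff_coe, Polynomial.finsetSum_coeff]
        simp only [← map_sum, Polynomial.coeff_monomial, Finset.sum_ite_eq', Finset.mem_range]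
        congr 1
        split_ifs with hi
        · rfl
        · apply Finset.sum_eq_zero
          intro s1 _
          rw [kap, if_neg, zero_mul]
          rintro ⟨_, h2, _⟩
          have := h2 h
          omega
    · rw [Finset.sum_eq_single (0, 0)]
      · rw [if_pos (by simp), Finset.sum_eq_single (n, 0)]
        · rw [cnt_zero_state m 0 (0, 0) (by simp)]
          simp [kap]
        · rintro ⟨i, j⟩ hij hne
          rw [Finset.HasAntidiagonal.mem_antidiagonal] at hij
          rw [cnt_zero_state m j (0, 0) (by simp), if_neg, mul_zero]
          rintro ⟨h, _⟩
          apply hne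
          ext <;> simp_all
        · simp
      · intro b _ hb
        split_ifs with h
        · apply Finset.sum_eq_zero
          rintro ⟨i, j⟩ _
          rw [cnt_zero_state m j b h, if_neg (fun h => hb h.2), mul_zero]
        · rfl
      · simp

theorem Aps_eq (m : ℕ) : Aps m = ∑ s, PowerSeries.mk (cnt m s) := by
  classical
  ext n
  rw [Aps, map_sum]
  simp only [PowerSeries.coeff_mk, aCount_eq, cnt]
  rw [Finset.sum_comm, Finset.card_filter]
  push_cast
  apply Finset.sum_congr rfl
  intro t _
  by_cases h : tB m t <;> simp [h]

theorem generating_function_rational (m : ℕ) (hm : 1 ≤ m) :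
    ∃ P Q : Polynomial ℚ, Q.coeff 0 ≠ 0 ∧
      (Q : PowerSeries ℚ) * Aps m = (P : PowerSeries ℚ) := by
  obtain ⟨Q, hQ, P, hP⟩ := linear_system _ _ (fun s => PowerSeries.mk (cnt m s)) (cnt_system m)
  refine ⟨∑ s, P s, Q, hQ, ?_⟩
  rw [Aps_eq, Finset.mul_sum, Finset.sum_congr rfl (fun s _ => hP s)]
  exact (map_sum (Polynomial.coeToPowerSeries.ringHom (R := ℚ)) P Finset.univ).symm
end

section
/- Fix m ≥ 2. In the dependency graph Γ_m, the cyclic strongly connected components are exactly U_m, V_m, and I_m = {(∞, m−1)}. The sets U_m and V_m are strongly connected components with more than one vertex; I_m is a strongly connected component consisting of a single vertex with a self-loop; and every vertex of B_m² outside U_m ∪ V_m ∪ I_m forms a singleton strongly connected component without a self-loop. -/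
/-- The state space `B_m²`, with `none` playing the role of `∞`. -/
abbrev StM (m : ℕ) := Option (Fin m) × Option (Fin m)

/-- Interpretation of a state coordinate as a threshold in `WithTop ℤ`. -/
def thr {m : ℕ} (o : Option (Fin m)) : WithTop ℤ :=
  Option.elim o ⊤ (fun j => (((j : ℕ) : ℤ) : WithTop ℤ))

/-- The entry of the matrix `W_m(x)` in row `pq`, column `rs`:
`Σ_{k=1}^m c_{k,p} x^k [(r,s) = (m-k, q-k)] + x [(r,s) = (p-1, m-1)]`. -/
noncomputable def Went (m : ℕ) (pq rs : StM m) : Polynomial ℤ :=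
  (∑ k ∈ Finset.Icc 1 m,
    if thr rs.1 = ((((m : ℤ) - (k : ℤ)) : ℤ) : WithTop ℤ) ∧ thr rs.2 = wsub (thr pq.2) k
    then Polynomial.C ((ckp k (thr pq.1) : ℤ)) * Polynomial.X ^ k else 0)
  + (if thr rs.1 = wsub (thr pq.1) 1 ∧ thr rs.2 = ((((m : ℤ) - 1) : ℤ) : WithTop ℤ)
     then Polynomial.X else 0)

/-- The dependency graph `Γ_m`: edge from `src` to `tgt` iff the `(tgt, src)` entry of
`W_m(x)` is a nonzero polynomial. -/
def EdgeG (m : ℕ) (src tgt : StM m) : Prop := Went m tgt src ≠ 0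

/-- Reachability in `Γ_m`. -/
def ReachG (m : ℕ) : StM m → StM m → Prop := Relation.ReflTransGen (EdgeG m)

/-- The strongly connected component of a vertex: all mutually reachable vertices. -/
def SCCof (m : ℕ) (a : StM m) : Set (StM m) := {b | ReachG m a b ∧ ReachG m b a}

/-- A set is a strongly connected component iff it is the component of some vertex. -/
def IsSCC (m : ℕ) (C : Set (StM m)) : Prop := ∃ a, C = SCCof m a

/-- A strongly connected component is cyclic iff it contains a directed cycle. -/
def CyclicSCC (m : ℕ) (C : Set (StM m)) : Prop :=
  IsSCC m C ∧ ∃ a ∈ C, ∃ b, EdgeG m a b ∧ ReachG m b a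

/-- `U_m = {(p, ∞) : 0 ≤ p ≤ m-1}`. -/
def Uset (m : ℕ) : Set (StM m) := {x | ∃ p : Fin m, x = (some p, none)}

/-- `V_m = {(p,q) : 0 ≤ q < p ≤ m-1} ∪ {(p, m-1) : 0 ≤ p ≤ m-2}`. -/
def Vset (m : ℕ) : Set (StM m) :=
  {x | ∃ p q : Fin m, x = (some p, some q) ∧
    ((q : ℕ) < (p : ℕ) ∨ ((p : ℕ) + 2 ≤ m ∧ (q : ℕ) = m - 1))}

/-- The state `(∞, m-1)` of the singleton component `I_m`. -/
def iSt (m : ℕ) : StM m := (none, if h : 0 < m then some ⟨m - 1, by omega⟩ else none)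

theorem ckp_pos_iff (m k : ℕ) (x : Option (Fin m)) :
    0 < ckp k (thr x) ↔ (k ≤ 1 ∨ ∀ p : Fin m, x = some p → 1 ≤ (p : ℕ)) := by
  unfold ckp
  split_ifs with h
  · simp [h]
  · simp only [h, false_or]
    constructor
    · intro hc p hp
      have := (Nat.card_pos_iff.mp hc).1
      obtain ⟨σ, -, h2⟩ := this
      subst hp
      have h3 : (k : ℤ) - ((((σ ⟨0, by omega⟩ : Fin (k - 1)) : ℕ) : ℤ) + 1) ≤ ((p : ℕ) : ℤ) := by
        have h2' := h2
        simp only [thr, Option.elim] at h2'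
        exact WithTop.coe_le_coe.mp h2'
      have := (σ ⟨0, by omega⟩).isLt
      omega
    · intro hp
      apply Nat.card_pos_iff.mpr
      refine ⟨⟨⟨Fin.revPerm, ?_, ?_⟩⟩, inferInstance⟩
      · rintro ⟨i, j, l, h1, h2, h3, h4⟩
        simp only [Fin.revPerm_apply, Fin.rev_lt_rev] at h3
        exact absurd h3 (not_lt.mpr (h1.trans h2).le)
      · cases x with
        | none => simp [thr]
        | some p =>
          have := hp p rfl
          simp only [thr, Option.elim]
          apply WithTop.coe_le_coe.mpr
          simp only [Fin.revPerm_apply, Fin.val_rev]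
          omega

theorem edge_iff (m : ℕ) (a b : StM m) : EdgeG m a b ↔
    ((∃ k ∈ Finset.Icc 1 m, (thr a.1 = ((((m : ℤ) - (k : ℤ)) : ℤ) : WithTop ℤ) ∧
        thr a.2 = wsub (thr b.2) k) ∧
        (k ≤ 1 ∨ ∀ p : Fin m, b.1 = some p → 1 ≤ (p : ℕ))) ∨
     (thr a.1 = wsub (thr b.1) 1 ∧ thr a.2 = ((((m : ℤ) - 1) : ℤ) : WithTop ℤ))) := by
  unfold EdgeG
  constructor
  · intro h
    by_contra hn
    push Not at hn
    obtain ⟨h1, h2⟩ := hn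
    apply h
    unfold Went
    rw [if_neg (fun hh => h2 hh.1 hh.2), add_zero]
    apply Finset.sum_eq_zero
    intro k hk
    split_ifs with hc
    · have : ckp k (thr b.1) = 0 := by
        by_contra h0
        have := (ckp_pos_iff m k b.1).mp (Nat.pos_of_ne_zero h0)
        obtain ⟨h3, p, h4, h5⟩ := h1 k hk hc
        rcases this with h6 | h6
        · omega
        · have := h6 p h4
          omega
      simp [this]
    · rfl
  · intro h h0
    have h0' := congrArg (Polynomial.eval 1) h0
    have hn : ∀ k ∈ Finset.Icc 1 m, 0 ≤ Polynomial.eval (1 : ℤ)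
      (if thr a.1 = ((((m : ℤ) - (k : ℤ)) : ℤ) : WithTop ℤ) ∧ thr a.2 = wsub (thr b.2) k
        then Polynomial.C ((ckp k (thr b.1) : ℤ)) * Polynomial.X ^ k else 0) := by
      intro k _
      split_ifs <;> simp
    unfold Went at h0'
    rw [Polynomial.eval_add, Polynomial.eval_finsetSum, Polynomial.eval_zero] at h0'
    have hs := Finset.sum_nonneg hn
    rcases h with ⟨k, hk, hc, hp⟩ | h
    · have h1 := Finset.single_le_sum hn hk
      rw [if_pos hc] at h1
      have h2 := (ckp_pos_iff m k b.1).mpr hp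
      simp only [Polynomial.eval_mul, Polynomial.eval_C, Polynomial.eval_pow, Polynomial.eval_X,
        one_pow, mul_one] at h1
      have h3 : 0 ≤ Polynomial.eval (1 : ℤ) (if thr a.1 = wsub (thr b.1) 1 ∧ thr a.2 = ((((m : ℤ) - 1) : ℤ) : WithTop ℤ)
     then Polynomial.X else 0) := by split_ifs <;> simp
      omega
    · rw [if_pos h, Polynomial.eval_X] at h0'
      omega

theorem thr_none {m : ℕ} : thr (none : Option (Fin m)) = ⊤ := rfl
theorem thr_some {m : ℕ} (p : Fin m) : thr (some p) = (((p : ℕ) : ℤ) : WithTop ℤ) := rfl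
theorem wsub_top (k : ℕ) : wsub ⊤ k = ⊤ := rfl
theorem wsub_coe (z : ℤ) (k : ℕ) : wsub (z : WithTop ℤ) k = ((z - k : ℤ) : WithTop ℤ) := rfl

theorem edge_nn (m : ℕ) (y : Option (Fin m)) (b : StM m) (h : EdgeG m (none, y) b) :
    b.1 = none ∧ ∃ q : Fin m, y = some q ∧ (q : ℕ) + 1 = m := by
  rw [edge_iff] at h
  obtain ⟨b1, b2⟩ := b
  rcases h with ⟨k, hk, ⟨h, -⟩, -⟩ | ⟨h1, h2⟩
  · exact absurd h (WithTop.top_ne_coe)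
  · cases b1 with
    | some p => 
      simp only [thr_none, thr_some, wsub_coe] at h1
      exact absurd h1 (WithTop.top_ne_coe)
    | none =>
      refine ⟨rfl, ?_⟩
      cases y with
      | none => exact absurd h2 (WithTop.top_ne_coe)
      | some q =>
        refine ⟨q, rfl, ?_⟩
        have := WithTop.coe_inj.mp h2
        omega

theorem edge_sn (m : ℕ) (r : Fin m) (b : StM m) (h : EdgeG m (some r, none) b) : b.2 = none := by
  rw [edge_iff] at h
  obtain ⟨b1, b2⟩ := b
  rcases h with ⟨k, hk, ⟨-, h⟩, -⟩ | ⟨h1, h2⟩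
  · cases b2 with
    | none => rfl
    | some q => exact absurd h (WithTop.top_ne_coe)
  · exact absurd h2 (WithTop.top_ne_coe)

theorem edge_A {m : ℕ} (r : Fin m) (s t : Fin m) (x : Option (Fin m))
    (h : (s : ℕ) + m = t + r) (hx : (r : ℕ) + 1 = m ∨ ∀ p : Fin m, x = some p → 1 ≤ (p : ℕ)) :
    EdgeG m (some r, some s) (x, some t) := by
  rw [edge_iff]
  left
  refine ⟨m - r, ?_, ⟨?_, ?_⟩, ?_⟩
  · simp; omega
  · apply WithTop.coe_inj.mpr; omega
  · apply WithTop.coe_inj.mpr; simp only []; omega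
  · rcases hx with hx | hx
    · left; omega
    · right; exact hx

theorem edge_A' {m : ℕ} (r : Fin m) (x : Option (Fin m))
    (hx : (r : ℕ) + 1 = m ∨ ∀ p : Fin m, x = some p → 1 ≤ (p : ℕ)) :
    EdgeG m (some r, none) (x, none) := by
  rw [edge_iff]
  left
  refine ⟨m - r, ?_, ⟨?_, ?_⟩, ?_⟩
  · simp; omega
  · apply WithTop.coe_inj.mpr; omega
  · rfl
  · rcases hx with hx | hx
    · left; omega
    · right; exact hx

theorem edge_B {m : ℕ} (r p s : Fin m) (x : Option (Fin m))
    (h : (r : ℕ) + 1 = p) (hs : (s : ℕ) + 1 = m) :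
    EdgeG m (some r, some s) (some p, x) := by
  rw [edge_iff]
  right
  constructor
  · apply WithTop.coe_inj.mpr; simp only []; omega
  · apply WithTop.coe_inj.mpr; omega

theorem edge_B' {m : ℕ} (s : Fin m) (x : Option (Fin m)) (hs : (s : ℕ) + 1 = m) :
    EdgeG m (none, some s) (none, x) := by
  rw [edge_iff]
  right
  exact ⟨rfl, by apply WithTop.coe_inj.mpr; omega⟩

theorem edge_ss (m : ℕ) (r s : Fin m) (b : StM m) (h : EdgeG m (some r, some s) b) :
    (s : ℕ) < r ∨ ((r : ℕ) + 2 ≤ m ∧ (s : ℕ) = m - 1) := by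
  rw [edge_iff] at h
  obtain ⟨b1, b2⟩ := b
  rcases h with ⟨k, hk, ⟨h1, h⟩, -⟩ | ⟨h1, h2⟩
  · cases b2 with
    | none => exact absurd h.symm (WithTop.top_ne_coe)
    | some q =>
      left
      have h1 := WithTop.coe_inj.mp h1
      have h := WithTop.coe_inj.mp h
      simp only [] at h
      omega
  · cases b1 with
    | none => exact absurd h1.symm (WithTop.top_ne_coe)
    | some q =>
      right
      have h1 := WithTop.coe_inj.mp h1
      have h := WithTop.coe_inj.mp h2
      simp only [] at h1
      omega

theorem iSt_eq (m : ℕ) (hm : 2 ≤ m) : iSt m = (none, some ⟨m - 1, by omega⟩) := by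
  unfold iSt
  rw [dif_pos (by omega)]

theorem edge_src (m : ℕ) (hm : 2 ≤ m) (a b : StM m) (h : EdgeG m a b) :
    a ∈ Uset m ∪ Vset m ∪ {iSt m} := by
  obtain ⟨a1, a2⟩ := a
  cases a1 with
  | none =>
    obtain ⟨-, q, rfl, hq⟩ := edge_nn m _ _ h
    right
    rw [Set.mem_singleton_iff, iSt_eq m hm]
    congr 2
    apply Fin.ext
    simp only []
    omega
  | some r =>
    cases a2 with
    | none => exact Or.inl (Or.inl ⟨r, rfl⟩)
    | some s => exact Or.inl (Or.inr ⟨r, s, rfl, edge_ss m r s b h⟩)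

theorem reach_sink (m : ℕ) (hm : 2 ≤ m) (a b : StM m) (ha : a ∉ Uset m ∪ Vset m ∪ {iSt m})
    (h : ReachG m a b) : a = b := by
  rcases Relation.ReflTransGen.cases_head h with h | ⟨c, h, -⟩
  · exact h
  · exact absurd (edge_src m hm a c h) ha

theorem reach_none1 (m : ℕ) (a b : StM m) (h : ReachG m a b) (ha : a.1 = none) : b.1 = none := by
  induction h with
  | refl => exact ha
  | @tail b c _ hbc ih =>
    obtain ⟨b1, b2⟩ := b
    simp only [] at ih
    subst ih
    exact (edge_nn m _ _ hbc).1

theorem reach_none2 (m : ℕ) (a b : StM m) (h : ReachG m a b) (h1 : b.1 ≠ none) (ha : a.2 = none) :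
    b.2 = none := by
  induction h with
  | refl => exact ha
  | @tail b c _ hbc ih =>
    obtain ⟨b1, b2⟩ := b
    cases b1 with
    | none => exact absurd (edge_nn m _ _ hbc).1 h1
    | some r =>
      have := ih (by simp)
      simp only [] at this
      subst this
      exact edge_sn m _ _ hbc

theorem U_reach (m : ℕ) (hm : 2 ≤ m) (p q : Fin m) :
    ReachG m (some p, none) (some q, none) := by
  have h1 : EdgeG m (some p, none) (some ⟨m - 1, by omega⟩, none) :=
    edge_A' p _ (Or.inr (by rintro p h; cases h; simp only []; omega))
  exact (Relation.ReflTransGen.single h1).tail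
    (edge_A' _ _ (Or.inl (by simp only []; omega)))

theorem U_scc (m : ℕ) (hm : 2 ≤ m) (a : StM m) (ha : a ∈ Uset m) : SCCof m a = Uset m := by
  obtain ⟨p, rfl⟩ := ha
  ext ⟨b1, b2⟩
  constructor
  · rintro ⟨h1, h2⟩
    cases b1 with
    | none => simpa using reach_none1 m _ _ h2 rfl
    | some r =>
      have := reach_none2 m _ _ h1 (by simp) rfl
      exact ⟨r, by simpa using this⟩
  · rintro ⟨q, h⟩
    rw [h]
    exact ⟨U_reach m hm _ _, U_reach m hm _ _⟩

theorem I_scc (m : ℕ) (hm : 2 ≤ m) : SCCof m (iSt m) = {iSt m} := by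
  ext b
  constructor
  · rintro ⟨h1, h2⟩
    by_contra hb
    have hb1 := reach_none1 m _ _ h1 rfl
    refine hb (reach_sink m hm b _ ?_ h2)
    rintro ((⟨p, rfl⟩ | ⟨p, q, rfl, -⟩) | h)
    · simp at hb1
    · simp at hb1
    · exact hb h
  · rintro rfl
    exact ⟨.refl, .refl⟩

/-- The hub `(m-1, m-2)`. -/
def hub (m : ℕ) (hm : 2 ≤ m) : StM m := (some ⟨m - 1, by omega⟩, some ⟨m - 2, by omega⟩)

theorem hub_top (m : ℕ) (hm : 2 ≤ m) (p s : Fin m) (hs : (s : ℕ) + 1 = m) :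
    EdgeG m (hub m hm) (some p, some s) :=
  edge_A _ _ _ _ (by simp only []; omega) (Or.inl (by simp only []; omega))

theorem hub_reach (m : ℕ) (hm : 2 ≤ m) (b : StM m) (hb : b ∈ Vset m) : ReachG m (hub m hm) b := by
  obtain ⟨p, q, rfl, h⟩ := hb
  by_cases hp : (p : ℕ) = 0
  · exact .single (hub_top m hm p q (by omega))
  · refine (Relation.ReflTransGen.single (hub_top m hm ⟨p - 1, by omega⟩ ⟨m - 1, by omega⟩ ?_)).tail
      (edge_B _ _ _ _ ?_ ?_) <;> simp only [] <;> omega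

theorem top_hub (m : ℕ) (hm : 2 ≤ m) (d : ℕ) : ∀ (p s : Fin m), (s : ℕ) + 1 = m →
    (p : ℕ) + 2 + d = m → ReachG m (some p, some s) (hub m hm) := by
  induction d with
  | zero =>
    intro p s hs hp
    exact .single (edge_B _ _ _ _ (by simp only []; omega) hs)
  | succ d ih =>
    intro p s hs hp
    exact .head (edge_B p ⟨p + 1, by omega⟩ s (some s) rfl hs) (ih _ _ hs (by simp only []; omega))

theorem last_hub (m : ℕ) (hm : 2 ≤ m) (d : ℕ) : ∀ (p s : Fin m), (p : ℕ) + 1 = m →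
    (s : ℕ) + 2 + d = m → ReachG m (some p, some s) (hub m hm) := by
  induction d with
  | zero =>
    intro p s hp hs
    have : ((some p, some s) : StM m) = hub m hm := by
      unfold hub
      congr 2 <;> apply Fin.ext <;> simp only [] <;> omega
    rw [this]
    exact .refl
  | succ d ih =>
    intro p s hp hs
    exact .head (edge_A p s ⟨s + 1, by omega⟩ (some p) (by simp only []; omega) (Or.inl hp))
      (ih _ _ hp (by simp only []; omega))

theorem reach_hub (m : ℕ) (hm : 2 ≤ m) (b : StM m) (hb : b ∈ Vset m) : ReachG m b (hub m hm) := by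
  obtain ⟨r, s, rfl, h⟩ := hb
  by_cases h1 : (r : ℕ) + 1 = m
  · exact last_hub m hm (m - 2 - s) r s h1 (by omega)
  rcases h with h | h
  · by_cases h2 : (s : ℕ) + 1 = r
    · refine .head (edge_A r s ⟨m - 1, by omega⟩ (some ⟨m - 2, by omega⟩) (by simp only []; omega)
        (Or.inr ?_)) (top_hub m hm 0 _ _ (by simp only []; omega) (by simp only []; omega))
      rintro p h; cases h; simp only []; omega
    · refine .head (edge_A r s ⟨s + m - r, by omega⟩ (some ⟨m - 1, by omega⟩)
        (by simp only []; omega)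
        (Or.inr ?_)) (last_hub m hm (r - s - 2) _ _ (by simp only []; omega) (by simp only []; omega))
      rintro p h; cases h; simp only []; omega
  · exact top_hub m hm (m - 2 - r) r s (by omega) (by omega)

theorem V_scc (m : ℕ) (hm : 2 ≤ m) (a : StM m) (ha : a ∈ Vset m) : SCCof m a = Vset m := by
  ext b
  constructor
  · rintro ⟨h1, h2⟩
    by_contra hb
    by_cases hU : b ∈ Uset m ∪ Vset m ∪ {iSt m}
    · obtain ⟨p, q, rfl, -⟩ := ha
      rcases hU with (⟨r, rfl⟩ | h) | rfl
      · simpa using reach_none2 m _ _ h2 (by simp) rfl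
      · exact hb h
      · simpa using reach_none1 m _ _ h2 rfl
    · exact hb (reach_sink m hm b a hU h2 ▸ ha)
  · intro hb
    exact ⟨(reach_hub m hm a ha).trans (hub_reach m hm b hb),
      (reach_hub m hm b hb).trans (hub_reach m hm a ha)⟩

theorem hub_mem (m : ℕ) (hm : 2 ≤ m) : hub m hm ∈ Vset m :=
  ⟨_, _, rfl, Or.inl (by simp only []; omega)⟩

theorem zt_mem (m : ℕ) (hm : 2 ≤ m) :
    ((some ⟨0, by omega⟩, some ⟨m - 1, by omega⟩) : StM m) ∈ Vset m :=
  ⟨_, _, rfl, Or.inr ⟨by simp only []; omega, rfl⟩⟩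

theorem scc_eq (m : ℕ) (a c : StM m) (h : a ∈ SCCof m c) : SCCof m a = SCCof m c := by
  ext b
  exact ⟨fun hb => ⟨h.1.trans hb.1, hb.2.trans h.2⟩, fun hb => ⟨h.2.trans hb.1, hb.2.trans h.1⟩⟩

theorem I_loop (m : ℕ) (hm : 2 ≤ m) : EdgeG m (iSt m) (iSt m) := by
  rw [iSt_eq m hm]
  exact edge_B' _ _ (by simp only []; omega)

theorem cyclic_components (m : ℕ) (hm : 2 ≤ m) :
    -- the cyclic strongly connected components are exactly U_m, V_m, I_m
    (∀ C : Set (StM m), IsSCC m C →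
      (CyclicSCC m C ↔ C = Uset m ∨ C = Vset m ∨ C = {iSt m})) ∧
    -- U_m and V_m are strongly connected components with more than one vertex
    (IsSCC m (Uset m) ∧ 1 < (Uset m).ncard) ∧
    (IsSCC m (Vset m) ∧ 1 < (Vset m).ncard) ∧
    -- I_m is a strongly connected component consisting of a single vertex with a self-loop
    (IsSCC m {iSt m} ∧ EdgeG m (iSt m) (iSt m)) ∧
    -- every other vertex is a singleton strongly connected component without a self-loop
    (∀ v : StM m, v ∉ Uset m ∪ Vset m ∪ {iSt m} →
      SCCof m v = {v} ∧ ¬ EdgeG m v v) := by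
  have hU0 : ((some ⟨0, by omega⟩, none) : StM m) ∈ Uset m := ⟨_, rfl⟩
  have hU1 : ((some ⟨1, by omega⟩, none) : StM m) ∈ Uset m := ⟨_, rfl⟩
  refine ⟨?_, ⟨⟨_, (U_scc m hm _ hU0).symm⟩, ?_⟩, ⟨⟨_, (V_scc m hm _ (hub_mem m hm)).symm⟩, ?_⟩,
    ⟨⟨_, (I_scc m hm).symm⟩, I_loop m hm⟩, ?_⟩
  · intro C hC
    constructor
    · rintro ⟨⟨c, rfl⟩, a, ha, b, hab, -⟩
      rw [← scc_eq m a c ha]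
      rcases edge_src m hm a b hab with (h | h) | h
      · exact Or.inl (U_scc m hm a h)
      · exact Or.inr (Or.inl (V_scc m hm a h))
      · rw [Set.mem_singleton_iff] at h
        subst h
        exact Or.inr (Or.inr (I_scc m hm))
    · intro h
      refine ⟨hC, ?_⟩
      rcases h with rfl | rfl | rfl
      · exact ⟨(some ⟨m - 1, by omega⟩, none), ⟨_, rfl⟩, _,
          edge_A' _ _ (Or.inl (by simp only []; omega)), .refl⟩
      · exact ⟨hub m hm, hub_mem m hm, (some ⟨0, by omega⟩, some ⟨m - 1, by omega⟩),
          hub_top m hm _ _ (by simp only []; omega), reach_hub m hm _ (zt_mem m hm)⟩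
      · exact ⟨iSt m, rfl, iSt m, I_loop m hm, .refl⟩
  · rw [Set.one_lt_ncard_iff (Set.toFinite _)]
    exact ⟨_, _, hU0, hU1, by simp⟩
  · rw [Set.one_lt_ncard_iff (Set.toFinite _)]
    refine ⟨_, _, hub_mem m hm, zt_mem m hm, ?_⟩
    intro h
    have := congrArg Prod.fst h
    simp only [hub, Option.some.injEq, Fin.mk.injEq] at this
    omega
  · intro v hv
    refine ⟨?_, fun h => hv (edge_src m hm v v h)⟩
    ext b
    constructor
    · rintro ⟨h, -⟩
      exact (reach_sink m hm v b hv h).symm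
    · rintro rfl
      exact ⟨.refl, .refl⟩
end

section
/- For m = 1 the sequence a_n^{(1)} satisfies an eventual homogeneous linear recurrence with constant coefficients of order at most 1 (i.e., there exist a rational constant c and an integer N such that a_n^{(1)} = c · a_{n−1}^{(1)} for all n ≥ N). For every m ≥ 2, the sequence a_n^{(m)} satisfies an eventual homogeneous linear recurrence with constant rational coefficients of order at most d_m = m² + m(m−1)(m+2)/2 + 1; that is, there exist rational numbers c_1, …, c_{d_m} and an integer N such that a_n^{(m)} = Σ_{i=1}^{d_m} c_i a_{n−i}^{(m)} for all n ≥ N. -/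
/-- The recurrence-order bound `d_m = m² + m(m-1)(m+2)/2 + 1`. -/
def dOrder (m : ℕ) : ℕ := m ^ 2 + m * (m - 1) * (m + 2) / 2 + 1


namespace BT132
open BinaryTree

abbrev BT := BinaryTree Unit

/-- The 132-avoiding word (on values `0..n-1`) of a binary tree. -/
def w : BT → List ℕ
  | .nil => []
  | .node _ L R => (w L).map (· + R.numNodes) ++ (L.numNodes + R.numNodes) :: w R

/-- Distance of the first letter from the top value. -/
def fd : BT → ℕ
  | .nil => 0
  | .node _ .nil _ => 0
  | .node _ (.node a b c) _ => fd (.node a b c) + 1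

/-- Distance of the last letter from the top value. -/
def ld : BT → ℕ
  | .nil => 0
  | .node _ _ .nil => 0
  | .node _ L (.node a b c) => ld (.node a b c) + L.numNodes + 1

/-- `m`-boundedness on the level of trees. -/
def Bd (m : ℕ) : BT → Prop
  | .nil => True
  | .node _ L R => Bd m L ∧ Bd m R ∧ (L ≠ .nil → ld L < m) ∧ (R ≠ .nil → fd R + L.numNodes + 1 ≤ m)

lemma fd_node (L R : BT) : fd (.node () L R) = if L = .nil then 0 else fd L + 1 := by
  cases L <;> simp [fd]

lemma ld_node (L R : BT) : ld (.node () L R) = if R = .nil then 0 else ld R + L.numNodes + 1 := by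
  cases R <;> simp [ld]

lemma numNodes_pos {t : BT} (h : t ≠ .nil) : 0 < t.numNodes := by
  cases t
  · exact absurd rfl h
  · simp [numNodes]

lemma w_eq_nil {t : BT} : w t = [] ↔ t = .nil := by
  cases t <;> simp [w]

lemma w_length (t : BT) : (w t).length = t.numNodes := by
  induction t with
  | nil => simp [w]
  | node u L R h1 h2 => simp [w, numNodes, h1, h2]; omega

lemma mem_w (t : BT) (x : ℕ) : x ∈ w t ↔ x < t.numNodes := by
  induction t generalizing x with
  | nil => simp [w]
  | node u L R h1 h2 =>
    simp only [w, numNodes, List.mem_append, List.mem_map, List.mem_cons, h1, h2]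
    constructor
    · rintro (⟨a, h, rfl⟩ | h | h) <;> omega
    · intro h
      by_cases h3 : x < R.numNodes
      · simp [h3]
      · by_cases h4 : x = L.numNodes + R.numNodes
        · simp [h4]
        · left; exact ⟨x - R.numNodes, by omega, by omega⟩

lemma w_nodup (t : BT) : (w t).Nodup := by
  induction t with
  | nil => simp [w]
  | node u L R h1 h2 =>
    simp only [w, List.nodup_append, List.nodup_cons, mem_w, List.mem_map, List.mem_cons]
    refine ⟨h1.map (fun a b h => by simpa using h), ⟨by omega, h2⟩, ?_⟩
    rintro a ⟨b, hb, rfl⟩ c (rfl | h) <;> omega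

lemma w_perm (t : BT) : (w t).Perm (List.range t.numNodes) := by
  rw [List.perm_ext_iff_of_nodup (w_nodup t) List.nodup_range]
  intro a; simp [mem_w]

def P132 (a b c : ℕ) : Prop := ¬ (a < c ∧ c < b)

lemma w_av (t : BT) : (w t).Triplewise P132 := by
  induction t with
  | nil => simp [w]
  | node u L R h1 h2 =>
    rw [w, List.triplewise_append, List.triplewise_cons]
    refine ⟨?_, ⟨?_, h2⟩, ?_, ?_⟩
    · apply List.Triplewise.map _ h1
      intro a b c; simp [P132]
    · rw [List.pairwise_iff_forall_sublist]
      intro a b h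
      have := (mem_w R b).1 (h.subset (by simp))
      simp only [P132]; omega
    · intro a ha
      simp only [List.mem_map, mem_w] at ha
      obtain ⟨a, ha, rfl⟩ := ha
      rw [List.pairwise_cons]
      constructor
      · intro b hb
        rw [mem_w] at hb; simp only [P132]; omega
      · rw [List.pairwise_iff_forall_sublist]
        intro x b h
        have := (mem_w R b).1 (h.subset (by simp))
        simp only [P132]; omega
    · intro a ha
      rw [List.pairwise_iff_forall_sublist]
      intro x y h
      have hx := h.subset (show x ∈ [x, y] by simp)
      have hy := h.subset (show y ∈ [x, y] by simp)
      simp only [List.mem_map, mem_w, List.mem_cons] at hx hy ha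
      obtain ⟨x, hx, rfl⟩ := hx
      obtain ⟨y, hy, rfl⟩ := hy
      simp only [P132]; omega

lemma w_inj (t s : BT) (h : w t = w s) : t = s := by
  induction t generalizing s with
  | nil => exact (w_eq_nil.1 (by rw [← h]; rfl)).symm
  | node u L R h1 h2 =>
    cases s with
    | nil => simp [w] at h
    | node v L' R' =>
      have hl := congrArg List.length h
      simp only [w_length, numNodes] at hl
      rw [w, w, List.append_cons_inj_of_notMem] at h
      · obtain ⟨a, b, c⟩ := h
        have := h2 _ c
        subst this
        have := h1 L' (List.map_injective_iff.2 (fun a b h => by simpa using h) a)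
        subst this
        rfl
      · simp only [List.mem_map, mem_w]; rintro ⟨a, b, c⟩; omega
      · simp only [mem_w]; omega

lemma w_surj (n : ℕ) : ∀ l : List ℕ, l.Perm (List.range n) → l.Triplewise P132 →
    ∃ t : BT, w t = l ∧ t.numNodes = n := by
  induction n using Nat.strong_induction_on with
  | _ n ih =>
    intro l hl ha
    cases n with
    | zero =>
      refine ⟨.nil, ?_, rfl⟩
      have : l = [] := by simpa using hl
      simp [this, w]
    | succ n =>
      have hn : n ∈ l := hl.mem_iff.2 (by simp)
      obtain ⟨A, B, rfl⟩ := List.append_of_mem hn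
      have hnd : (A ++ n :: B).Nodup := hl.nodup_iff.2 List.nodup_range
      have hmem : ∀ x, x ∈ A ++ n :: B ↔ x < n + 1 := by
        intro x; rw [hl.mem_iff]; simp
      have hlen : A.length + B.length = n := by
        have := hl.length_eq
        simp at this; omega
      rw [List.nodup_append, List.nodup_cons] at hnd
      obtain ⟨hA, ⟨hnB, hB⟩, hd⟩ := hnd
      rw [List.triplewise_append, List.triplewise_cons] at ha
      obtain ⟨aA, ⟨-, aB⟩, hab, -⟩ := ha
      have hgt : ∀ a ∈ A, ∀ b ∈ B, b < a := by
        intro a ha b hb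
        have h1 := (List.pairwise_cons.1 (hab a ha)).1 b hb
        have h2 := hd a ha b (by simp [hb])
        have h3 := (hmem b).1 (by simp [hb])
        have h4 : b ≠ n := fun h => hnB (h ▸ hb)
        simp only [P132] at h1; omega
      have hAn : ∀ a ∈ A, a < n := by
        intro a ha
        have h3 := (hmem a).1 (by simp [ha])
        have := hd a ha n (by simp)
        omega
      have hBn : ∀ a ∈ B, a < n := by
        intro a ha
        have h3 := (hmem a).1 (by simp [ha])
        have : a ≠ n := fun h => hnB (h ▸ ha)
        omega
      -- B is downward closed
      have hBd : ∀ b ∈ B, ∀ c, c ≤ b → c ∈ B := by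
        intro b hb c hc
        have h5 := hBn b hb
        have := (hmem c).2 (by omega)
        simp only [List.mem_append, List.mem_cons] at this
        rcases this with h | h | h
        · have := hgt c h b hb; omega
        · omega
        · exact h
      have hBlt : ∀ b ∈ B, b < B.length := by
        intro b hb
        have hs : List.range (b + 1) ⊆ B := by
          intro c hc; exact hBd b hb c (by simp at hc; omega)
        have := (List.nodup_range.subperm hs).length_le
        simpa using this
      have hBp : B.Perm (List.range B.length) := by
        apply (hB.subperm (fun b hb => by simpa using hBlt b hb)).perm_of_length_le
        simp
      have hAge : ∀ a ∈ A, B.length ≤ a := by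
        intro a ha
        by_contra hc
        have : a ∈ B := hBp.mem_iff.2 (by simpa using hc)
        exact lt_irrefl _ (hgt a ha a this)
      set A' := A.map (· - B.length) with hA'
      have hAA : A'.map (· + B.length) = A := by
        rw [hA', List.map_map]
        conv_rhs => rw [← List.map_id A]
        apply List.map_congr_left
        intro a ha
        have := hAge a ha
        simp; omega
      have hA'nd : A'.Nodup := by
        rw [← hAA] at hA; exact hA.of_map
      have hA'p : A'.Perm (List.range A.length) := by
        apply (hA'nd.subperm _).perm_of_length_le
        · simp [hA']
        · intro x hx
          simp only [hA', List.mem_map] at hx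
          obtain ⟨a, ha, rfl⟩ := hx
          have := hAn a ha; have := hAge a ha
          simp; omega
      have aA' : A'.Triplewise P132 := by
        rw [← hAA] at aA
        exact aA.of_map (fun {a b c} => by simp [P132])
      obtain ⟨L, hL, hL'⟩ := ih A.length (by omega) A' hA'p aA'
      obtain ⟨R, hR, hR'⟩ := ih B.length (by omega) B hBp aB
      refine ⟨.node () L R, ?_, ?_⟩
      · rw [w, hL, hR, hL', hR', hAA, hlen]
      · simp only [numNodes]; omega

lemma head_w (t : BT) : ∀ x ∈ (w t).head?, x + fd t + 1 = t.numNodes := by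
  induction t with
  | nil => simp [w]
  | node u L R h1 h2 =>
    intro x hx
    by_cases hL : L = .nil
    · subst hL
      simp [w] at hx
      simp [fd, numNodes, hx]
    · rw [fd_node, if_neg hL]
      have : w L ≠ [] := fun h => hL (w_eq_nil.1 h)
      obtain ⟨y, l, hy⟩ := List.exists_cons_of_ne_nil this
      have h3 := h1 y (by simp [hy])
      simp [w, hy] at hx
      simp only [numNodes]; omega

lemma last_w (t : BT) : ∀ x ∈ (w t).getLast?, x + ld t + 1 = t.numNodes := by
  induction t with
  | nil => simp [w]
  | node u L R h1 h2 =>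
    intro x hx
    by_cases hL : R = .nil
    · subst hL
      simp [w] at hx
      simp [ld, numNodes, hx]
    · rw [ld_node, if_neg hL]
      have : w R ≠ [] := fun h => hL (w_eq_nil.1 h)
      obtain ⟨y, hy⟩ := Option.ne_none_iff_exists'.1 (mt List.getLast?_eq_none_iff.1 this)
      have h3 := h2 y (by simp [hy])
      simp [w, hy, List.getLast?_append, List.getLast?_cons] at hx
      simp only [numNodes]; omega

def Cl (m : ℕ) (x y : ℕ) : Prop := |((y : ℕ) : ℤ) - ((x : ℕ) : ℤ)| ≤ (m : ℤ)

lemma chain_w (m : ℕ) (t : BT) : (w t).IsChain (Cl m) ↔ Bd m t := by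
  induction t with
  | nil => simp [w, Bd]
  | node u L R h1 h2 =>
    rw [w, List.isChain_append, List.isChain_map, List.isChain_cons, Bd, ← h1, ← h2]
    have e1 : List.IsChain (fun a b => Cl m (a + R.numNodes) (b + R.numNodes)) (w L)
        ↔ List.IsChain (Cl m) (w L) := by
      have : (fun a b => Cl m (a + R.numNodes) (b + R.numNodes)) = Cl m := by
        funext a b; simp [Cl]
      rw [this]
    rw [e1]
    have e2 : (∀ y ∈ (w R).head?, Cl m (L.numNodes + R.numNodes) y) ↔
        (R ≠ .nil → fd R + L.numNodes + 1 ≤ m) := by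
      have h3 := head_w R
      cases hw : (w R).head? with
      | none => 
        have := w_eq_nil.1 (List.head?_eq_none_iff.1 hw)
        simp [this]
      | some y =>
        have h5 := h3 y hw
        have h4 : R ≠ .nil := by
          rintro rfl; simp [w] at hw
        simp only [Option.mem_def, Option.some.injEq, forall_eq', Cl, h4, ne_eq, not_false_eq_true,
          true_imp_iff, abs_le]
        omega
    have e3 : (∀ x ∈ ((w L).map (· + R.numNodes)).getLast?,
        ∀ y ∈ ((L.numNodes + R.numNodes) :: w R).head?, Cl m x y) ↔ (L ≠ .nil → ld L < m) := by
      have h3 := last_w L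
      rw [List.getLast?_map]
      cases hw : (w L).getLast? with
      | none => 
        have := w_eq_nil.1 (List.getLast?_eq_none_iff.1 hw)
        simp [this]
      | some y =>
        have h5 := h3 y hw
        have h4 : L ≠ .nil := by
          rintro rfl; simp [w] at hw
        simp only [Option.mem_def, Option.some.injEq, forall_eq', Cl, h4, ne_eq, not_false_eq_true,
          true_imp_iff, abs_le, Option.map_some, List.head?_cons]
        push_cast
        omega
    rw [e2, e3]
    tauto

/-- The word of a permutation. -/
def pw {n : ℕ} (π : Equiv.Perm (Fin n)) : List ℕ := List.ofFn (fun i => (π i : ℕ))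

lemma pw_perm {n : ℕ} (π : Equiv.Perm (Fin n)) : (pw π).Perm (List.range n) := by
  have hnd : (pw π).Nodup := by
    rw [pw, List.nodup_ofFn]
    intro a b h
    exact π.injective (Fin.ext h)
  apply (hnd.subperm _).perm_of_length_le
  · simp [pw]
  · intro x hx
    simp only [pw, List.mem_ofFn] at hx
    obtain ⟨i, rfl⟩ := hx
    simp

lemma pw_inj {n : ℕ} (π σ : Equiv.Perm (Fin n)) (h : pw π = pw σ) : π = σ := by
  have := List.ofFn_injective h
  ext i
  exact congrFun this i

lemma pw_surj {n : ℕ} (l : List ℕ) (h : l.Perm (List.range n)) :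
    ∃ π : Equiv.Perm (Fin n), pw π = l := by
  have hlen : l.length = n := by simpa using h.length_eq
  subst hlen
  have hlt : ∀ i : Fin l.length, l.get i < l.length := by
    intro i
    have := h.mem_iff.1 (List.get_mem l i)
    simpa using this
  have hnd : l.Nodup := h.nodup_iff.2 List.nodup_range
  let f : Fin l.length → Fin l.length := fun i => ⟨l.get i, hlt i⟩
  have hf : Function.Injective f := by
    intro i j hij
    exact List.nodup_iff_injective_get.1 hnd (Fin.mk.inj hij)
  refine ⟨Equiv.ofBijective f (Finite.injective_iff_bijective.1 hf), ?_⟩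
  simp [pw, f]

lemma pw_av {n : ℕ} (π : Equiv.Perm (Fin n)) : Avoids132 π ↔ (pw π).Triplewise P132 := by
  rw [List.triplewise_iff_getElem]
  simp only [Avoids132, pw, List.length_ofFn, List.getElem_ofFn, P132]
  constructor
  · intro h i j k hij hjk hk hc
    exact h ⟨⟨i, by omega⟩, ⟨j, by omega⟩, ⟨k, hk⟩, hij, hjk, hc.1, hc.2⟩
  · rintro h ⟨i, j, k, hij, hjk, h1, h2⟩
    exact h i j k hij hjk k.2 ⟨h1, h2⟩

lemma pw_bd {n : ℕ} (m : ℕ) (π : Equiv.Perm (Fin n)) : MBounded m π ↔ (pw π).IsChain (Cl m) := by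
  rw [List.isChain_iff_getElem]
  simp only [MBounded, pw, List.length_ofFn, List.getElem_ofFn, Cl]

open Classical in
/-- Number of `m`-bounded trees with `n` nodes satisfying `P`. -/
noncomputable def cnt (m : ℕ) (P : BT → Prop) (n : ℕ) : ℚ :=
  ∑ t ∈ treesOfNumNodesEq n, if Bd m t ∧ P t then 1 else 0

lemma aCount_eq (m n : ℕ) : (aCount m n : ℚ) = cnt m (fun _ => True) n := by
  classical
  have : aCount m n = ((treesOfNumNodesEq n).filter (fun t => Bd m t)).card := by
    rw [aCount, ← Nat.card_eq_finsetCard]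
    symm
    have hp : ∀ t : {t // t ∈ (treesOfNumNodesEq n).filter (fun t => Bd m t)},
        ∃ π : Equiv.Perm (Fin n), pw π = w t.1 := by
      rintro ⟨t, ht⟩
      rw [Finset.mem_filter, mem_treesOfNumNodesEq] at ht
      apply pw_surj
      have h := w_perm t
      rwa [ht.1] at h
    choose g hg using hp
    refine Nat.card_eq_of_bijective (fun t => ⟨g t, ?_, ?_⟩) ⟨?_, ?_⟩
    · rw [pw_av, hg]; exact w_av _
    · rw [pw_bd, hg, chain_w]; exact (Finset.mem_filter.1 t.2).2
    · intro t s h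
      have h' : g t = g s := congrArg Subtype.val h
      apply Subtype.ext
      apply w_inj
      rw [← hg, ← hg, h']
    · rintro ⟨π, h1, h2⟩
      obtain ⟨t, ht, hn⟩ := w_surj n (pw π) (pw_perm π) ((pw_av π).1 h1)
      refine ⟨⟨t, ?_⟩, ?_⟩
      · rw [Finset.mem_filter, mem_treesOfNumNodesEq, ← chain_w, ht, ← pw_bd]
        exact ⟨hn, h2⟩
      · apply Subtype.ext
        apply pw_inj
        rw [hg, ht]
  rw [this, cnt]
  simp

lemma sum_trees_succ (f : BT → ℚ) (n : ℕ) :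
    ∑ t ∈ treesOfNumNodesEq (n + 1), f t =
      ∑ l ∈ Finset.range (n + 1), ∑ L ∈ treesOfNumNodesEq l, ∑ R ∈ treesOfNumNodesEq (n - l),
        f (.node () L R) := by
  rw [treesOfNumNodesEq_succ, Finset.sum_biUnion,
    ← Finset.Nat.sum_antidiagonal_eq_sum_range_succ
      (fun l r => ∑ L ∈ treesOfNumNodesEq l, ∑ R ∈ treesOfNumNodesEq r, f (.node () L R))]
  · apply Finset.sum_congr rfl
    rintro ⟨i, j⟩ -
    rw [Finset.sum_map, Finset.sum_product]
    rfl
  · simp_rw [Set.PairwiseDisjoint, Set.Pairwise, Finset.disjoint_left]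
    aesop

lemma cnt_congr {m : ℕ} {P Q : BT → Prop} {n : ℕ}
    (h : ∀ t : BT, t.numNodes = n → (P t ↔ Q t)) : cnt m P n = cnt m Q n := by
  classical
  unfold cnt
  apply Finset.sum_congr rfl
  intro t ht
  rw [mem_treesOfNumNodesEq] at ht
  simp only [h t ht]

lemma cnt_false {m : ℕ} {P : BT → Prop} {n : ℕ}
    (h : ∀ t : BT, t.numNodes = n → ¬ P t) : cnt m P n = 0 := by
  classical
  unfold cnt
  apply Finset.sum_eq_zero
  intro t ht
  rw [mem_treesOfNumNodesEq] at ht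
  simp [h t ht]

open Classical in
lemma cnt_rec (m : ℕ) (P : BT → Prop) (n : ℕ) (hm : 1 ≤ m) (hn : m ≤ n) :
    cnt m P (n + 1) = cnt m (fun L => ld L < m ∧ P (.node () L .nil)) n +
      ∑ l ∈ Finset.range m, ∑ L ∈ treesOfNumNodesEq l,
        if Bd m L ∧ (L ≠ .nil → ld L < m) then
          cnt m (fun R => fd R + l + 1 ≤ m ∧ P (.node () L R)) (n - l) else 0 := by
  conv_lhs => rw [cnt, sum_trees_succ, Finset.sum_range_succ, add_comm]
  congr 1
  · simp only [Nat.sub_self, treesOfNumNodesEq_zero, Finset.sum_singleton, cnt]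
    apply Finset.sum_congr rfl
    intro L hL
    rw [mem_treesOfNumNodesEq] at hL
    have : L ≠ .nil := by
      rintro rfl; simp [numNodes] at hL; omega
    simp [Bd, this, and_assoc]
  · have hs : Finset.range m ⊆ Finset.range n := Finset.range_subset_range.2 hn
    rw [← Finset.sum_subset hs]
    · apply Finset.sum_congr rfl
      intro l hl
      have hl : l < m := by simpa using hl
      apply Finset.sum_congr rfl
      intro L hL
      rw [mem_treesOfNumNodesEq] at hL
      have e : (if Bd m L ∧ (L ≠ .nil → ld L < m) then
          cnt m (fun R => fd R + l + 1 ≤ m ∧ P (.node () L R)) (n - l) else 0) =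
          ∑ R ∈ treesOfNumNodesEq (n - l), if Bd m L ∧ (L ≠ .nil → ld L < m) then
            (if Bd m R ∧ fd R + l + 1 ≤ m ∧ P (.node () L R) then 1 else 0) else 0 := by
        split_ifs <;> simp [cnt]
      rw [e]
      apply Finset.sum_congr rfl
      intro R hR
      rw [mem_treesOfNumNodesEq] at hR
      have : R ≠ .nil := by
        rintro rfl; simp [numNodes] at hR; omega
      simp only [Bd, this, hL, ne_eq, not_false_eq_true, true_imp_iff]
      rw [← ite_and]
      apply if_congr _ rfl rfl
      tauto
    · intro l hl hl'
      have hl : l < n := by simpa using hl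
      have hl' : m ≤ l := by simpa using hl'
      apply Finset.sum_eq_zero
      intro L hL
      apply Finset.sum_eq_zero
      intro R hR
      rw [mem_treesOfNumNodesEq] at hL hR
      have : R ≠ .nil := by
        rintro rfl; simp [numNodes] at hR; omega
      rw [if_neg]
      rintro ⟨h, -⟩
      have := h.2.2.2 this
      omega

/-- joint count -/
noncomputable def G (m i j : ℕ) : ℕ → ℚ := cnt m (fun t => fd t = i ∧ ld t = j)
noncomputable def F (m i : ℕ) : ℕ → ℚ := cnt m (fun t => fd t = i)
noncomputable def E (m : ℕ) : ℕ → ℚ := cnt m (fun t => ld t < m)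
noncomputable def A (m : ℕ) : ℕ → ℚ := cnt m (fun _ => True)

open Classical in
lemma cnt_split_FG (m a b : ℕ) (p : ℕ → ℕ → Prop) (n : ℕ) :
    cnt m (fun t => fd t < a ∧ ld t < b ∧ p (fd t) (ld t)) n =
      ∑ i ∈ Finset.range a, ∑ j ∈ Finset.range b, if p i j then G m i j n else 0 := by
  have : ∀ i j, (if p i j then G m i j n else 0) =
      ∑ t ∈ treesOfNumNodesEq n, if i = fd t ∧ j = ld t ∧ Bd m t ∧ p i j then 1 else 0 := by
    intro i j
    rw [G, cnt]
    split_ifs with h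
    · apply Finset.sum_congr rfl
      intro t _
      congr 1
      apply propext
      constructor <;> (rintro ⟨h1, h2, h3⟩; simp_all)
    · simp [h]
  simp only [this]
  rw [Finset.sum_congr rfl (fun i _ => Finset.sum_comm), Finset.sum_comm, cnt]
  apply Finset.sum_congr rfl
  intro t _
  split_ifs with h
  · rw [Finset.sum_eq_single (fd t), Finset.sum_eq_single (ld t)]
    · simp [h]
    · intro j _ hj; simp [hj]
    · simp [h]
    · intro i _ hi; simp [hi]
    · simp [h]
  · symm
    apply Finset.sum_eq_zero
    intro i hi
    apply Finset.sum_eq_zero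
    intro j hj
    rw [if_neg]
    rintro ⟨rfl, rfl, h1, h2⟩
    exact h ⟨h1, by simpa using hi, by simpa using hj, h2⟩

open Classical in
lemma cnt_split_F (m a : ℕ) (n : ℕ) :
    cnt m (fun t => fd t < a) n = ∑ i ∈ Finset.range a, F m i n := by
  simp only [F, cnt]
  rw [Finset.sum_comm]
  apply Finset.sum_congr rfl
  intro t _
  split_ifs with h
  · rw [Finset.sum_eq_single (fd t)]
    · simp [h]
    · intro i _ hi; simp [hi.symm]
    · simp [h]
  · symm
    apply Finset.sum_eq_zero
    intro i hi
    rw [if_neg]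
    rintro ⟨h1, rfl⟩
    exact h ⟨h1, by simpa using hi⟩

lemma part_one (n : ℕ) (hn : 1 ≤ n) : A 1 (n + 2) = A 1 (n + 1) := by
  have hA : ∀ n, 1 ≤ n → A 1 (n + 1) = E 1 n + F 1 0 n := by
    intro n hn
    rw [A, cnt_rec _ _ _ le_rfl hn]
    simp [E, F, Bd]
  have hE : ∀ n, 1 ≤ n → E 1 (n + 1) = E 1 n := by
    intro n hn
    rw [E, cnt_rec _ _ _ le_rfl hn]
    have h1 : cnt 1 (fun L => ld L < 1 ∧ ld (.node () L .nil) < 1) n =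
        cnt 1 (fun t => ld t < 1) n := by
      apply cnt_congr; intro t _; simp [ld]
    rw [h1]
    simp only [Finset.sum_range_one, treesOfNumNodesEq_zero, Finset.sum_singleton]
    rw [cnt_false (P := fun R => fd R + 0 + 1 ≤ 1 ∧ ld (.node () .nil R) < 1)]
    · simp
    · intro t ht
      have : t ≠ .nil := by
        rintro rfl; simp [numNodes] at ht; omega
      rw [ld_node, if_neg this]; simp
  have hF : ∀ n, 1 ≤ n → F 1 0 (n + 1) = F 1 0 n := by
    intro n hn
    rw [F, cnt_rec _ _ _ le_rfl hn, cnt_false]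
    · simp [Bd, fd]
    · intro t ht
      have : t ≠ .nil := by
        rintro rfl; simp [numNodes] at ht; omega
      rw [fd_node, if_neg this]; simp
  rw [hA _ (by omega), hA _ hn, hE _ hn, hF _ hn]

abbrev Idx (m : ℕ) := Option (Σ l : Fin m, Fin (m - l) × Option (Fin (m - l)))

noncomputable def X (m : ℕ) : Idx m → (ℕ → ℚ)
  | none => fun n => E m (n + m)
  | some ⟨l, i, none⟩ => fun n => F m i (n + m - l)
  | some ⟨l, i, some j⟩ => fun n => G m i j (n + m - l)

noncomputable def S (m : ℕ) : Submodule ℚ (ℕ → ℚ) := Submodule.span ℚ (Set.range (X m))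

lemma E_mem (m : ℕ) : (fun n => E m (n + m)) ∈ S m := Submodule.subset_span ⟨none, rfl⟩

lemma F_mem (m l i : ℕ) (h : i + l < m) : (fun n => F m i (n + m - l)) ∈ S m :=
  Submodule.subset_span ⟨some ⟨⟨l, by omega⟩, ⟨i, by simp; omega⟩, none⟩, rfl⟩

lemma G_mem (m l i j : ℕ) (h : i + l < m) (h' : j + l < m) :
    (fun n => G m i j (n + m - l)) ∈ S m :=
  Submodule.subset_span
    ⟨some ⟨⟨l, by omega⟩, ⟨i, by simp; omega⟩, some ⟨j, by simp; omega⟩⟩, rfl⟩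

lemma FG_mem (m l : ℕ) (p : ℕ → ℕ → Prop) :
    (fun n => cnt m (fun t => fd t < m - l ∧ ld t < m - l ∧ p (fd t) (ld t)) (n + m - l)) ∈ S m := by
  classical
  have : (fun n => cnt m (fun t => fd t < m - l ∧ ld t < m - l ∧ p (fd t) (ld t)) (n + m - l)) =
      ∑ i ∈ Finset.range (m - l), ∑ j ∈ Finset.range (m - l),
        if p i j then (fun n => G m i j (n + m - l)) else 0 := by
    funext n
    rw [cnt_split_FG]
    simp only [Finset.sum_apply]
    refine Finset.sum_congr rfl fun i _ => Finset.sum_congr rfl fun j _ => ?_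
    split_ifs <;> rfl
  rw [this]
  refine Submodule.sum_mem _ fun i hi => Submodule.sum_mem _ fun j hj => ?_
  rw [Finset.mem_range] at hi hj
  split_ifs
  · exact G_mem m l i j (by omega) (by omega)
  · exact zero_mem _

lemma FF_mem (m l : ℕ) : (fun n => cnt m (fun t => fd t < m - l) (n + m - l)) ∈ S m := by
  have : (fun n => cnt m (fun t => fd t < m - l) (n + m - l)) =
      ∑ i ∈ Finset.range (m - l), (fun n => F m i (n + m - l)) := by
    funext n
    rw [cnt_split_F]
    simp only [Finset.sum_apply]
  rw [this]
  refine Submodule.sum_mem _ fun i hi => ?_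
  rw [Finset.mem_range] at hi
  exact F_mem m l i (by omega)

lemma mem_congr {m l : ℕ} {P Q : BT → Prop} (hl : l < m)
    (h : ∀ t : BT, t ≠ .nil → (P t ↔ Q t))
    (hQ : (fun n => cnt m Q (n + m - l)) ∈ S m) : (fun n => cnt m P (n + m - l)) ∈ S m := by
  convert hQ using 2 with n
  apply cnt_congr
  intro t ht
  apply h
  rintro rfl
  simp [numNodes] at ht
  omega

lemma rec_mem (m : ℕ) (hm : 1 ≤ m) (P : BT → Prop)
    (h1 : (fun n => cnt m (fun L => ld L < m ∧ P (.node () L .nil)) (n + m - 0)) ∈ S m)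
    (h2 : ∀ L : BT, L.numNodes < m →
      (fun n => cnt m (fun R => fd R + L.numNodes + 1 ≤ m ∧ P (.node () L R))
        (n + m - L.numNodes)) ∈ S m) :
    (fun n => cnt m P (n + m + 1)) ∈ S m := by
  classical
  have : (fun n => cnt m P (n + m + 1)) =
      (fun n => cnt m (fun L => ld L < m ∧ P (.node () L .nil)) (n + m - 0)) +
      ∑ l ∈ Finset.range m, ∑ L ∈ treesOfNumNodesEq l,
        if Bd m L ∧ (L ≠ .nil → ld L < m) then
          (fun n => cnt m (fun R => fd R + l + 1 ≤ m ∧ P (.node () L R)) (n + m - l)) else 0 := by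
    funext n
    rw [cnt_rec m P (n + m) hm (by omega)]
    simp only [Finset.sum_apply, Pi.add_apply, Nat.sub_zero]
    congr 1
    refine Finset.sum_congr rfl fun i _ => Finset.sum_congr rfl fun j _ => ?_
    split_ifs <;> rfl
  rw [this]
  refine Submodule.add_mem _ h1 (Submodule.sum_mem _ fun l hl => Submodule.sum_mem _ fun L hL => ?_)
  rw [mem_treesOfNumNodesEq] at hL
  rw [Finset.mem_range] at hl
  subst hL
  split_ifs
  · exact h2 L hl
  · exact zero_mem _

lemma fd_node_eq (L R : BT) : fd (.node () L R) = fd (.node () L .nil) := by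
  rw [fd_node, fd_node]

lemma G_succ_mem (m : ℕ) (hm : 1 ≤ m) (i j : ℕ) (hi : i < m) (hj : j < m) :
    (fun n => G m i j (n + m + 1)) ∈ S m := by
  apply rec_mem m hm
  · refine mem_congr (by omega) ?_ (FG_mem m 0 (fun a _ => a + 1 = i ∧ j = 0))
    intro t ht
    rw [fd_node, if_neg ht, ld_node, if_pos rfl]
    omega
  · intro L hL
    refine mem_congr hL ?_ (FG_mem m L.numNodes
      (fun _ b => fd (.node () L .nil) = i ∧ b + L.numNodes + 1 = j))
    intro t ht
    rw [fd_node_eq, ld_node, if_neg ht]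
    omega

lemma F_succ_mem (m : ℕ) (hm : 1 ≤ m) (i : ℕ) (hi : i < m) :
    (fun n => F m i (n + m + 1)) ∈ S m := by
  apply rec_mem m hm
  · refine mem_congr (by omega) ?_ (FG_mem m 0 (fun a _ => a + 1 = i))
    intro t ht
    rw [fd_node, if_neg ht]
    omega
  · intro L hL
    by_cases h : fd (.node () L .nil) = i
    · refine mem_congr hL ?_ (FF_mem m L.numNodes)
      intro t ht
      rw [fd_node_eq]
      omega
    · refine mem_congr hL ?_ (FG_mem m L.numNodes (fun _ _ => False))
      intro t ht
      rw [fd_node_eq]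
      simp [h]

lemma E_succ_mem (m : ℕ) (hm : 1 ≤ m) : (fun n => E m (n + m + 1)) ∈ S m := by
  apply rec_mem m hm
  · refine mem_congr (by omega) ?_ (E_mem m)
    intro t ht
    rw [ld_node, if_pos rfl]
    omega
  · intro L hL
    refine mem_congr hL ?_ (FG_mem m L.numNodes (fun _ b => b + L.numNodes + 1 < m))
    intro t ht
    rw [ld_node, if_neg ht]
    omega

lemma A_succ_mem (m : ℕ) (hm : 1 ≤ m) : (fun n => A m (n + m + 1)) ∈ S m := by
  apply rec_mem m hm
  · refine mem_congr (by omega) ?_ (E_mem m)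
    intro t ht
    simp
  · intro L hL
    refine mem_congr hL ?_ (FF_mem m L.numNodes)
    intro t ht
    simp only [and_true]
    omega

/-- The shift operator. -/
def U : (ℕ → ℚ) →ₗ[ℚ] (ℕ → ℚ) := LinearMap.funLeft ℚ ℚ Nat.succ

lemma U_apply (f : ℕ → ℚ) (n : ℕ) : U f n = f (n + 1) := rfl

lemma U_pow_apply (k : ℕ) (f : ℕ → ℚ) (n : ℕ) : (U ^ k) f n = f (n + k) := by
  induction k generalizing n with
  | zero => simp
  | succ k ih =>
    rw [pow_succ', Module.End.mul_apply, U_apply, ih]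
    congr 1; omega

lemma U_mem (m : ℕ) (hm : 1 ≤ m) : ∀ f ∈ S m, U f ∈ S m := by
  intro f hf
  have : S m ≤ (S m).comap U := by
    rw [S, Submodule.span_le]
    rintro _ ⟨t, rfl⟩
    change U (X m t) ∈ S m
    have e : ∀ g : ℕ → ℚ, ∀ _ : ℕ, (∀ n, g n = X m t (n + 1)) → g ∈ S m → U (X m t) ∈ S m := by
      intro g _ h hg
      have : U (X m t) = g := by funext n; rw [h, U_apply]
      rwa [this]
    rcases t with _ | ⟨⟨l, hl⟩, ⟨i, hi⟩, _ | ⟨j, hj⟩⟩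
    · refine e _ 0 ?_ (E_succ_mem m hm)
      intro n; simp only [X]; congr 1; omega
    · simp only at hi
      cases l with
      | zero =>
        refine e _ 0 ?_ (F_succ_mem m hm i (by omega))
        intro n; simp only [X]; congr 1; omega
      | succ l =>
        refine e _ 0 ?_ (F_mem m l i (by omega))
        intro n; simp only [X]; congr 1; omega
    · simp only at hi hj
      cases l with
      | zero =>
        refine e _ 0 ?_ (G_succ_mem m hm i j (by omega) (by omega))
        intro n; simp only [X]; congr 1; omega
      | succ l =>
        refine e _ 0 ?_ (G_mem m l i j (by omega) (by omega))
        intro n; simp only [X]; congr 1; omega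
  exact this hf

lemma card_sum (m : ℕ) : ∑ l : Fin m, (m - l.1) * (m - l.1 + 1) * 3 = m * (m + 1) * (m + 2) := by
  rw [Fin.sum_univ_eq_sum_range (fun l => (m - l) * (m - l + 1) * 3)]
  induction m with
  | zero => simp
  | succ m ih =>
    rw [Finset.sum_range_succ']
    simp only [Nat.add_sub_add_right, ih, Nat.sub_zero]
    ring

lemma card_Idx (m : ℕ) (hm : 2 ≤ m) : Fintype.card (Idx m) ≤ dOrder m := by
  have h := card_sum m
  simp only [Fintype.card_option, Fintype.card_sigma, Fintype.card_prod, Fintype.card_fin]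
  rw [← Finset.sum_mul] at h
  unfold dOrder
  obtain ⟨k, rfl⟩ := Nat.exists_eq_add_of_le hm
  have h2 : (2 + k) * (2 + k - 1) * (2 + k + 2) / 2 * 2 = (2 + k) * (2 + k - 1) * (2 + k + 2) := by
    apply Nat.div_mul_cancel
    have : 2 + k - 1 = k + 1 := by omega
    rw [this]
    have := (Nat.even_mul_succ_self (k + 1)).two_dvd
    refine Dvd.dvd.mul_right ?_ _
    convert this using 1; ring
  have h3 : 2 + k - 1 = k + 1 := by omega
  rw [h3] at h2 ⊢
  nlinarith [Nat.zero_le k, Nat.zero_le (k*k), Nat.zero_le (k*k*k)]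

open Polynomial in
lemma exists_rec (V : Submodule ℚ (ℕ → ℚ)) [FiniteDimensional ℚ V] (hU : ∀ f ∈ V, U f ∈ V)
    (d : ℕ) (hd : Module.finrank ℚ V ≤ d) :
    ∃ q : ℕ → ℚ, ∀ f ∈ V, ∀ n, f (n + d) = ∑ k ∈ Finset.range d, q k * f (n + k) := by
  let T : V →ₗ[ℚ] V := U.restrict hU
  let p : ℚ[X] := T.charpoly * Polynomial.X ^ (d - Module.finrank ℚ V)
  have hp : p.Monic := T.charpoly_monic.mul (monic_X_pow _)
  have hdeg : p.natDegree = d := by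
    rw [T.charpoly_monic.natDegree_mul (monic_X_pow _), LinearMap.charpoly_natDegree,
      natDegree_X_pow]
    omega
  have h0 : aeval T p = 0 := by
    simp [p, LinearMap.aeval_self_charpoly]
  refine ⟨fun k => - p.coeff k, fun f hf n => ?_⟩
  have hT : ∀ k, (((T ^ k) ⟨f, hf⟩ : V) : ℕ → ℚ) = (U ^ k) f := by
    intro k
    rw [Module.End.pow_restrict]
    rfl
  have h1 := congrArg (fun L : V →ₗ[ℚ] V => ((L ⟨f, hf⟩ : V) : ℕ → ℚ) n) h0
  simp only [aeval_eq_sum_range, hdeg, LinearMap.sum_apply, LinearMap.smul_apply,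
    Submodule.coe_sum, Finset.sum_apply, Submodule.coe_smul, hT, Pi.smul_apply, U_pow_apply,
    smul_eq_mul, LinearMap.zero_apply, ZeroMemClass.coe_zero,
    Pi.zero_apply] at h1
  have h2 : p.coeff d = 1 := by rw [← hdeg]; exact hp
  rw [Finset.sum_range_succ, h2] at h1
  simp only [neg_mul, Finset.sum_neg_distrib]
  linarith

lemma part_two (m : ℕ) (hm : 2 ≤ m) : ∃ c : ℕ → ℚ, ∃ N : ℕ, ∀ n : ℕ, N ≤ n →
    (aCount m n : ℚ) = ∑ i ∈ Finset.Icc 1 (dOrder m), c i * (aCount m (n - i) : ℚ) := by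
  have : FiniteDimensional ℚ (S m) := FiniteDimensional.span_of_finite ℚ (Set.finite_range _)
  have hfin : Module.finrank ℚ (S m) ≤ dOrder m :=
    (finrank_range_le_card (R := ℚ) (X m)).trans (card_Idx m hm)
  obtain ⟨q, hq⟩ := exists_rec (S m) (U_mem m (by omega)) (dOrder m) hfin
  have h := hq _ (A_succ_mem m (by omega))
  refine ⟨fun i => q (dOrder m - i), dOrder m + m + 1, fun n hn => ?_⟩
  obtain ⟨k, rfl⟩ := Nat.exists_eq_add_of_le hn
  simp only [aCount_eq]
  change A m _ = ∑ i ∈ Finset.Icc 1 (dOrder m), q (dOrder m - i) * A m _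
  have h' := h k
  rw [show dOrder m + m + 1 + k = k + dOrder m + m + 1 by omega, h']
  symm
  refine Finset.sum_bij (fun i _ => dOrder m - i) ?_ ?_ ?_ ?_
  · intro i hi; simp at hi ⊢; omega
  · intro i hi j hj hij; simp at hi hj; omega
  · intro i hi
    simp at hi
    exact ⟨dOrder m - i, by simp; omega, by omega⟩
  · intro i hi
    simp at hi
    congr 2
    omega

end BT132

theorem recurrence_order_bound :
    (∃ c : ℚ, ∃ N : ℕ, ∀ n : ℕ, N ≤ n → (aCount 1 n : ℚ) = c * (aCount 1 (n - 1) : ℚ)) ∧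
    (∀ m : ℕ, 2 ≤ m → ∃ c : ℕ → ℚ, ∃ N : ℕ, ∀ n : ℕ, N ≤ n →
      (aCount m n : ℚ) = ∑ i ∈ Finset.Icc 1 (dOrder m), c i * (aCount m (n - i) : ℚ)) := by
  refine ⟨⟨1, 3, fun n hn => ?_⟩, fun m hm => BT132.part_two m hm⟩
  obtain ⟨k, rfl⟩ := Nat.exists_eq_add_of_le hn
  rw [BT132.aCount_eq, BT132.aCount_eq, one_mul]
  have h := BT132.part_one (1 + k) (by omega)
  rw [show 3 + k = 1 + k + 2 by omega, show 1 + k + 2 - 1 = 1 + k + 1 by omega]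
  exact h
end

section
/- For m = 2, the generating function satisfies the formal power series identity (1 − x)²(1 − x − x³) · Σ_{n≥0} a_n^{(2)} x^n = 1 − 2x + 2x² − x⁴ − x⁶. In particular, a_0^{(2)}, a_1^{(2)}, a_2^{(2)}, … = 1, 1, 2, 5, 8, 12, 18, 26, 37, 53, 76, 109, …. -/
/-- Structural 132-avoidance on lists. -/
def Av : List ℕ → Prop
  | [] => True
  | x :: t => Av t ∧ t.Pairwise (fun b c => ¬ (x < c ∧ c < b))

/-- Adjacent entries differ by at most two. -/
def Nr (x y : ℕ) : Prop := x ≤ y + 2 ∧ y ≤ x + 2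

/-- List version of the 2-bounded 132-avoiding permutations of `0, …, n-1`. -/
def Good (n : ℕ) (l : List ℕ) : Prop :=
  l.Nodup ∧ (∀ x, x ∈ l ↔ x < n) ∧ Av l ∧ l.IsChain Nr

theorem av_append_max (n : ℕ) (t : List ℕ) (h : ∀ x ∈ t, x < n) : Av (t ++ [n]) ↔ Av t := by
  induction t with
  | nil => simp [Av]
  | cons x t ih =>
    simp only [List.cons_append, Av, ih (fun y hy => h y (by simp [hy])), List.pairwise_append]
    constructor
    · rintro ⟨a, b, -⟩; exact ⟨a, b⟩
    · rintro ⟨a, b⟩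
      refine ⟨a, b, by simp, ?_⟩
      intro y hy z hz
      have := h y (by simp [hy])
      simp at hz
      omega

theorem av_append_mid (L R : List ℕ) (n : ℕ) (h : Av (L ++ n :: R)) :
    ∀ a ∈ L, ∀ c ∈ R, ¬ (a < c ∧ c < n) := by
  induction L with
  | nil => simp
  | cons x t ih =>
    simp only [List.cons_append, Av, List.pairwise_append, List.pairwise_cons] at h
    intro a ha c hc
    rcases List.mem_cons.1 ha with rfl | ha
    · exact h.2.2.1.1 c hc
    · exact ih h.1 a ha c hc

theorem good_cons (n : ℕ) (t : List ℕ) :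
    Good (n + 1) (n :: t) ↔ Good n t ∧ ∀ h ∈ t.head?, n ≤ h + 2 := by
  unfold Good
  simp only [List.nodup_cons, List.mem_cons, Av, List.isChain_cons, Nr]
  constructor
  · rintro ⟨⟨h1, h2⟩, h3, ⟨h4, h5⟩, h6, h7⟩
    refine ⟨⟨h2, ?_, h4, h7⟩, fun h hh => (h6 h hh).1⟩
    intro x
    have := h3 x
    constructor
    · intro hx
      have : x ≠ n := by rintro rfl; exact h1 hx
      have := (h3 x).1 (Or.inr hx); omega
    · intro hx
      rcases (h3 x).2 (by omega) with h | h
      · omega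
      · exact h
  · rintro ⟨⟨h2, h3, h4, h7⟩, h6⟩
    refine ⟨⟨fun h => ?_, h2⟩, ?_, ⟨h4, ?_⟩, ?_, h7⟩
    · have := (h3 n).1 h; omega
    · intro x; rw [h3]; omega
    · apply List.pairwise_of_forall_mem_list
      intro b hb c hc
      have := (h3 b).1 hb
      have := (h3 c).1 hc
      omega
    · intro y hy
      have := (h3 y).1 (List.mem_of_mem_head? hy)
      exact ⟨h6 y hy, by omega⟩

theorem good_append (n : ℕ) (t : List ℕ) :
    Good (n + 1) (t ++ [n]) ↔ Good n t ∧ ∀ h ∈ t.getLast?, n ≤ h + 2 := by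
  unfold Good
  simp only [List.nodup_append, List.mem_append, List.isChain_append, Nr, List.mem_singleton]
  constructor
  · rintro ⟨⟨h1, -, h2⟩, h3, h4, h7, -, h6⟩
    have key : ∀ x, x ∈ t ↔ x < n := by
      intro x
      constructor
      · intro hx
        have := h2 x hx n rfl
        have := (h3 x).1 (Or.inl hx); omega
      · intro hx
        rcases (h3 x).2 (by omega) with h | h
        · exact h
        · omega
    refine ⟨⟨h1, key, (av_append_max n t (fun x hx => (key x).1 hx)).1 h4, h7⟩, 
      fun h hh => (h6 h hh n (by simp)).2⟩
  · rintro ⟨⟨h2, h3, h4, h7⟩, h6⟩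
    refine ⟨⟨h2, by simp, ?_⟩, ?_, (av_append_max n t (fun x hx => (h3 x).1 hx)).2 h4, h7, by simp, ?_⟩
    · intro a ha b hb
      have := (h3 a).1 ha; omega
    · intro x; rw [h3]; omega
    · intro x hx y hy
      have := (h3 x).1 (List.mem_of_mem_getLast? hx)
      have := h6 x hx
      simp at hy
      omega

theorem good_mid (n : ℕ) (t : List ℕ) :
    Good (n + 2) (n :: (n + 1) :: t) ↔ Good n t ∧ ∀ h ∈ t.head?, n ≤ h + 1 := by
  unfold Good
  simp only [List.nodup_cons, List.mem_cons, Av, List.isChain_cons, Nr, List.pairwise_cons]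
  constructor
  · rintro ⟨⟨h0, h1, h2⟩, h3, ⟨⟨h4, h5⟩, h8, h9⟩, h6, h7, h10⟩
    refine ⟨⟨h2, ?_, h4, h10⟩, fun h hh => by have := (h7 h hh).1; omega⟩
    intro x
    push Not at h0
    constructor
    · intro hx
      have : x ≠ n := by rintro rfl; exact h0.2 hx
      have : x ≠ n + 1 := by rintro rfl; exact h1 hx
      have := (h3 x).1 (Or.inr (Or.inr hx)); omega
    · intro hx
      rcases (h3 x).2 (by omega) with h | h | h
      · omega
      · omega
      · exact h
  · rintro ⟨⟨h2, h3, h4, h7⟩, h6⟩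
    refine ⟨⟨?_, ?_, h2⟩, ?_, ⟨⟨h4, ?_⟩, ?_, ?_⟩, ?_, ?_, h7⟩
    · rw [h3]; omega
    · rw [h3]; omega
    · intro x; rw [h3]; omega
    · apply List.pairwise_of_forall_mem_list
      intro b hb c hc
      have := (h3 b).1 hb
      have := (h3 c).1 hc
      omega
    · intro c hc 
      have := (h3 c).1 hc
      omega
    · apply List.pairwise_of_forall_mem_list
      intro b hb c hc
      have := (h3 b).1 hb
      have := (h3 c).1 hc
      omega
    · simp; omega
    · intro y hy
      have := (h3 y).1 (List.mem_of_mem_head? hy)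
      have := h6 y hy
      exact ⟨by omega, by omega⟩

theorem good_cases (n : ℕ) (l : List ℕ) (h : Good (n + 1) l) :
    (∃ t, l = n :: t) ∨ (∃ t, l = t ++ [n]) ∨
      ∃ k t, n = k + 1 ∧ t ≠ [] ∧ l = k :: (k + 1) :: t := by
  obtain ⟨h1, h2, h3, h4⟩ := h
  obtain ⟨L, R, rfl⟩ := List.append_of_mem ((h2 n).2 (by omega))
  rcases L with _ | ⟨q, L⟩
  · left; exact ⟨R, rfl⟩
  rcases R with _ | ⟨r, R⟩
  · right; left; exact ⟨_, rfl⟩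
  right; right
  have hm := av_append_mid _ _ _ h3
  have hn := List.nodup_append.1 h1
  have hr : Nr n r := by
    have := (List.isChain_append.1 h4).2.1
    simp only [List.isChain_cons_cons] at this
    exact this.1
  have hrn : r < n := by
    have h5 := (h2 r).1 (by simp)
    have : r ≠ n := by rintro rfl; simp at hn
    omega
  have hL : ∀ a ∈ q :: L, a = n - 1 ∧ 1 ≤ n := by
    intro a ha
    have h5 := hm a ha r (by simp)
    have h6 := hn.2.2 a ha n (by simp)
    have h7 := hn.2.2 a ha r (by simp)
    have h8 := (h2 a).1 (by simp only [List.mem_append]; exact Or.inl ha)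
    have := hr.1
    omega
  have hq := hL q (by simp)
  rcases L with _ | ⟨p, L⟩
  · refine ⟨q, r :: R, by omega, by simp, ?_⟩
    have : q + 1 = n := by omega
    simp [this]
  · have hp := hL p (by simp)
    have : p = q := by omega
    subst this
    simp at hn

theorem good_zero (l : List ℕ) : Good 0 l ↔ l = [] := by
  constructor
  · rintro ⟨-, h, -⟩
    apply List.eq_nil_iff_forall_not_mem.2
    intro a ha
    have := (h a).1 ha
    omega
  · rintro rfl
    simp [Good, Av]

theorem good_length {n : ℕ} {l : List ℕ} (h : Good n l) : l.length = n := by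
  rw [← List.toFinset_card_of_nodup h.1]
  have : l.toFinset = Finset.range n := by
    ext x; simp [h.2.1 x]
  simp [this]

theorem av_iff (l : List ℕ) : Av l ↔ ∀ i j k : ℕ, ∀ hij : i < j, ∀ hjk : j < k,
    ∀ hk : k < l.length, ¬ (l[i] < l[k] ∧ l[k] < l[j]) := by
  induction l with
  | nil => simp [Av]
  | cons x t ih =>
    rw [Av, ih, List.pairwise_iff_getElem]
    constructor
    · rintro ⟨h1, h2⟩ i j k hij hjk hk
      obtain ⟨j, rfl⟩ : ∃ j', j = j' + 1 := ⟨j - 1, by omega⟩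
      obtain ⟨k, rfl⟩ : ∃ j', k = j' + 1 := ⟨k - 1, by omega⟩
      simp only [List.length_cons] at hk
      rcases i with _ | i
      · simpa using h2 j k (by omega) (by omega) (by omega)
      · simpa using h1 i j k (by omega) (by omega) (by omega)
    · intro h
      constructor
      · intro i j k hij hjk hk
        have := h (i + 1) (j + 1) (k + 1) (by omega) (by omega) (by simpa using hk)
        simp only [List.getElem_cons_succ] at this
        exact this
      · intro i j hi hj hij
        have := h 0 (i + 1) (j + 1) (by omega) (by omega) (by simpa using hj)
        simp only [List.getElem_cons_succ, List.getElem_cons_zero] at this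
        exact this

/-- One-line notation of a permutation. -/
def toL {n : ℕ} (π : Equiv.Perm (Fin n)) : List ℕ := List.ofFn (fun i => (π i : ℕ))

theorem good_toL {n : ℕ} (π : Equiv.Perm (Fin n)) :
    Good n (toL π) ↔ Avoids132 π ∧ MBounded 2 π := by
  unfold Good toL
  have h1 : (List.ofFn (fun i => (π i : ℕ))).Nodup :=
    List.nodup_ofFn.2 (fun a b h => π.injective (Fin.ext h))
  have h2 : ∀ x, x ∈ List.ofFn (fun i => (π i : ℕ)) ↔ x < n := by
    intro x
    rw [List.mem_ofFn]
    constructor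
    · rintro ⟨i, rfl⟩; exact (π i).2
    · intro h; exact ⟨π.symm ⟨x, h⟩, by simp⟩
  have h3 : Av (List.ofFn (fun i => (π i : ℕ))) ↔ Avoids132 π := by
    rw [av_iff, Avoids132]
    constructor
    · rintro h ⟨i, j, k, hij, hjk, hh⟩
      have := h i j k hij hjk (by simp)
      simp only [List.getElem_ofFn] at this
      exact this hh
    · intro h i j k hij hjk hk hh
      simp only [List.length_ofFn] at hk
      simp only [List.getElem_ofFn] at hh
      exact h ⟨⟨i, by omega⟩, ⟨j, by omega⟩, ⟨k, by omega⟩, hij, hjk, hh⟩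
  have h4 : (List.ofFn (fun i => (π i : ℕ))).IsChain Nr ↔ MBounded 2 π := by
    rw [List.isChain_iff_getElem, MBounded]
    simp only [List.length_ofFn, List.getElem_ofFn, Nr, abs_le]
    refine forall_congr' fun i => forall_congr' fun h => ?_
    push_cast
    omega
  tauto

theorem aCount_eq_s7 (n : ℕ) : aCount 2 n = {l | Good n l}.ncard := by
  rw [aCount, ← Nat.card_coe_set_eq]
  refine Nat.card_congr (Equiv.ofBijective
    (fun p => ⟨toL p.1, (good_toL p.1).2 p.2⟩) ⟨?_, ?_⟩)
  · rintro ⟨p, hp⟩ ⟨q, hq⟩ h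
    simp only [Subtype.mk.injEq, toL, List.ofFn_inj] at h
    apply Subtype.ext
    ext i
    exact congrFun h i
  · rintro ⟨l, hl⟩
    have hlen := good_length hl
    have hl' : Good n l := hl
    let f : Fin n → Fin n := fun i => ⟨l[i.1]'(by omega), (hl'.2.1 _).1 (List.getElem_mem _)⟩
    have hf : Function.Injective f := by
      intro a b hab
      have : l[a.1]'(by omega) = l[b.1]'(by omega) := congrArg Fin.val hab
      exact Fin.ext ((List.Nodup.getElem_inj_iff hl'.1).1 this)
    let π := Equiv.ofBijective f (Finite.injective_iff_bijective.1 hf)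
    have hπ : toL π = l := by
      apply List.ext_getElem
      · simp [toL, hlen]
      · intro i h1 h2
        simp [toL, π, f]
    exact ⟨⟨π, (good_toL π).1 (hπ ▸ hl')⟩, Subtype.ext hπ⟩

theorem good_finite (n : ℕ) : {l | Good n l}.Finite := by
  refine (List.finite_toSet (List.range n).permutations).subset ?_
  intro l hl
  simp only [Set.mem_ofPred_eq, List.mem_permutations]
  rw [List.perm_ext_iff_of_nodup hl.1 List.nodup_range]
  intro a; rw [hl.2.1]; simp

/-- first entry is maximal -/
def FS (n : ℕ) : Set (List ℕ) := {l | Good (n + 1) l ∧ l.head? = some n}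
/-- first entry is second largest -/
def GS (n : ℕ) : Set (List ℕ) := {l | Good (n + 2) l ∧ l.head? = some n}
/-- last entry is maximal -/
def ES (n : ℕ) : Set (List ℕ) := {l | Good (n + 1) l ∧ l.getLast? = some n}
/-- last entry is second largest -/
def DS (n : ℕ) : Set (List ℕ) := {l | Good (n + 2) l ∧ l.getLast? = some n}
/-- first entry maximal, last entry among the two largest -/
def HS (n : ℕ) : Set (List ℕ) :=
  {l | Good (n + 1) l ∧ l.head? = some n ∧ ∀ h ∈ l.getLast?, n ≤ h + 1}

theorem good_head {n h : ℕ} {l : List ℕ} (hl : Good n l) (hh : l.head? = some h) : h < n :=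
  (hl.2.1 h).1 (List.mem_of_mem_head? hh)

theorem good_last {n h : ℕ} {l : List ℕ} (hl : Good n l) (hh : l.getLast? = some h) : h < n :=
  (hl.2.1 h).1 (List.mem_of_mem_getLast? hh)

theorem good_ne {n : ℕ} {l : List ℕ} (hl : Good (n + 1) l) : l ≠ [] := by
  rintro rfl
  have := good_length hl
  simp at this

theorem good_ex_head {n : ℕ} {l : List ℕ} (hl : Good (n + 1) l) :
    ∃ h t, l = h :: t ∧ h < n + 1 := by
  obtain ⟨h, t, rfl⟩ := List.exists_cons_of_ne_nil (good_ne hl)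
  exact ⟨h, t, rfl, good_head hl rfl⟩

theorem good_ex_last {n : ℕ} {l : List ℕ} (hl : Good (n + 1) l) :
    ∃ t h, l = t ++ [h] ∧ h < n + 1 := by
  obtain ⟨t, h, rfl⟩ := (List.eq_nil_or_concat l).resolve_left (good_ne hl)
  exact ⟨t, h, by simp, good_last hl (by simp)⟩

theorem good_one (l : List ℕ) : Good 1 l ↔ l = [0] := by
  constructor
  · intro h
    obtain ⟨a, t, rfl, ha⟩ := good_ex_head h
    have := good_length h
    simp at this
    subst this
    obtain rfl : a = 0 := by omega
    rfl
  · rintro rfl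
    rw [good_cons 0 []]
    simp [good_zero]

theorem FS_zero : FS 0 = {[0]} := by
  ext l; simp only [FS, Set.mem_ofPred_eq, zero_add, good_one, Set.mem_singleton_iff]
  constructor
  · exact fun h => h.1
  · rintro rfl; simp

theorem ES_zero : ES 0 = {[0]} := by
  ext l; simp only [ES, Set.mem_ofPred_eq, zero_add, good_one, Set.mem_singleton_iff]
  constructor
  · exact fun h => h.1
  · rintro rfl; simp

theorem HS_zero : HS 0 = {[0]} := by
  ext l; simp only [HS, Set.mem_ofPred_eq, zero_add, good_one, Set.mem_singleton_iff]
  constructor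
  · exact fun h => h.1
  · rintro rfl; simp

theorem FS_one : FS 1 = {[1, 0]} := by
  ext l; simp only [FS, Set.mem_ofPred_eq, Set.mem_singleton_iff]
  constructor
  · rintro ⟨h, h2⟩
    obtain ⟨a, t, rfl, ha⟩ := good_ex_head h
    simp at h2; subst h2
    rw [good_cons, good_one] at h
    rw [h.1]
  · rintro rfl; rw [good_cons, good_one]; simp

theorem ES_one : ES 1 = {[0, 1]} := by
  ext l; simp only [ES, Set.mem_ofPred_eq, Set.mem_singleton_iff]
  constructor
  · rintro ⟨h, h2⟩
    obtain ⟨t, a, rfl, ha⟩ := good_ex_last h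
    simp at h2; subst h2
    rw [good_append, good_one] at h
    rw [h.1]; rfl
  · rintro rfl; rw [show [0, 1] = [0] ++ [1] from rfl, good_append, good_one]; simp

theorem HS_one : HS 1 = {[1, 0]} := by
  rw [← FS_one]
  ext l; simp only [HS, FS, Set.mem_ofPred_eq]
  constructor
  · exact fun h => ⟨h.1, h.2.1⟩
  · exact fun h => ⟨h.1, h.2, fun h _ => by omega⟩

theorem good_two (l : List ℕ) : Good 2 l ↔ l = [1, 0] ∨ l = [0, 1] := by
  constructor
  · intro h
    rcases good_cases 1 l h with ⟨t, rfl⟩ | ⟨t, rfl⟩ | ⟨k, t, hk, ht, rfl⟩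
    · left
      exact FS_one.subset ⟨h, rfl⟩
    · right
      exact ES_one.subset ⟨h, by simp⟩
    · obtain rfl : k = 0 := by omega
      have := good_length h
      simp at this
      exact absurd this ht
  · rintro (h | h)
    · exact (FS_one.superset h).1
    · exact (ES_one.superset h).1

theorem GS_zero : GS 0 = {[0, 1]} := by
  ext l; simp only [GS, Set.mem_ofPred_eq, zero_add, good_two, Set.mem_singleton_iff]
  constructor
  · rintro ⟨rfl | rfl, h⟩
    · simp at h
    · rfl
  · rintro rfl; simp

theorem FS_succ (n : ℕ) : FS (n + 2) = (List.cons (n + 2)) '' (FS (n + 1) ∪ GS n) := by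
  ext l
  simp only [FS, GS, Set.mem_ofPred_eq, Set.mem_image, Set.mem_union]
  constructor
  · rintro ⟨h, h2⟩
    obtain ⟨a, t, rfl, ha⟩ := good_ex_head h
    simp at h2; subst h2
    rw [good_cons] at h
    refine ⟨t, ?_, rfl⟩
    obtain ⟨b, s, rfl, hb⟩ := good_ex_head h.1
    have := h.2 b (by simp)
    rcases (by omega : b = n + 1 ∨ b = n) with rfl | rfl
    · left; exact ⟨h.1, rfl⟩
    · right; exact ⟨h.1, rfl⟩
  · rintro ⟨t, (⟨h, h2⟩ | ⟨h, h2⟩), rfl⟩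
    · rw [good_cons]; simp [h, h2]
    · rw [good_cons]; simp [h, h2]

theorem ES_succ (n : ℕ) : ES (n + 2) = (fun l => l ++ [n + 2]) '' (ES (n + 1) ∪ DS n) := by
  ext l
  simp only [ES, DS, Set.mem_ofPred_eq, Set.mem_image, Set.mem_union]
  constructor
  · rintro ⟨h, h2⟩
    obtain ⟨t, a, rfl, ha⟩ := good_ex_last h
    simp at h2; subst h2
    rw [good_append] at h
    refine ⟨t, ?_, rfl⟩
    obtain ⟨s, b, rfl, hb⟩ := good_ex_last h.1
    have := h.2 b (by simp)
    rcases (by omega : b = n + 1 ∨ b = n) with rfl | rfl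
    · left; exact ⟨h.1, by simp⟩
    · right; exact ⟨h.1, by simp⟩
  · rintro ⟨t, (⟨h, h2⟩ | ⟨h, h2⟩), rfl⟩
    · rw [good_append]; simp [h, h2]
    · rw [good_append]; simp [h, h2]

theorem HS_succ (n : ℕ) : HS (n + 2) = (fun l => (n + 2) :: (l ++ [n + 1])) '' HS n := by
  ext l
  simp only [HS, Set.mem_ofPred_eq, Set.mem_image]
  constructor
  · rintro ⟨h, h2, h3⟩
    obtain ⟨a, t, rfl, ha⟩ := good_ex_head h
    simp at h2; subst h2
    rw [good_cons] at h
    obtain ⟨s, b, rfl, hb⟩ := good_ex_last h.1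
    have h4 := h3 b (by simp [List.getLast?_cons])
    obtain rfl : b = n + 1 := by omega
    rw [good_append] at h
    refine ⟨s, ⟨h.1.1, ?_, ?_⟩, rfl⟩
    · obtain ⟨c, s, rfl, hc⟩ := good_ex_head h.1.1
      have := h.2 c (by simp)
      simp; omega
    · intro x hx
      have := h.1.2 x hx
      omega
  · rintro ⟨s, ⟨h, h2, h3⟩, rfl⟩
    rw [good_cons, good_append]
    refine ⟨⟨⟨h, ?_⟩, ?_⟩, rfl, ?_⟩
    · intro x hx; have := h3 x hx; omega
    · simp [List.head?_append, h2]
    · simp [List.getLast?_cons]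

theorem DS_eq (n : ℕ) : DS n = HS (n + 1) := by
  ext l
  simp only [HS, DS, Set.mem_ofPred_eq]
  constructor
  · rintro ⟨h, h2⟩
    refine ⟨h, ?_, ?_⟩
    · rcases good_cases _ l h with ⟨t, rfl⟩ | ⟨t, rfl⟩ | ⟨k, t, hk, ht, rfl⟩
      · rfl
      · simp at h2
      · exfalso
        obtain rfl : n = k := by omega
        have h3 := h.1
        simp only [List.nodup_cons, List.mem_cons] at h3
        obtain ⟨s, b, rfl⟩ := (List.eq_nil_or_concat t).resolve_left ht
        simp [List.getLast?_cons] at h2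
        simp [h2] at h3
    · rw [h2]; simp
  · rintro ⟨h, h2, h3⟩
    refine ⟨h, ?_⟩
    obtain ⟨t, b, rfl, hb⟩ := good_ex_last h
    have := h3 b (by simp)
    have : b ≠ n + 1 := by
      rintro rfl
      have h4 := h.1
      have h5 := good_length h
      rcases t with _ | ⟨c, t⟩
      · simp at h5
      · simp at h2; simp [h2] at h4
    simp; omega

theorem GS_succ (n : ℕ) : GS (n + 1) =
    (fun t => (n + 1) :: (n + 2) :: t) '' FS n ∪ (fun l => l ++ [n + 2]) '' HS (n + 1) := by
  ext l
  simp only [GS, FS, HS, Set.mem_ofPred_eq, Set.mem_image, Set.mem_union]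
  constructor
  · rintro ⟨h, h2⟩
    rcases good_cases _ l h with ⟨t, rfl⟩ | ⟨t, rfl⟩ | ⟨k, t, hk, ht, rfl⟩
    · simp at h2
    · right
      have h' := h
      rw [good_append] at h
      refine ⟨t, ⟨h.1, ?_, ?_⟩, rfl⟩
      · obtain ⟨c, s, rfl, hc⟩ := good_ex_head h.1
        simpa using h2
      · intro x hx; have := h.2 x hx; omega
    · left
      obtain rfl : k = n + 1 := by omega
      rw [good_mid] at h
      refine ⟨t, ⟨h.1, ?_⟩, rfl⟩
      obtain ⟨c, s, rfl, hc⟩ := good_ex_head h.1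
      have := h.2 c (by simp)
      simp; omega
  · rintro (⟨t, ⟨h, h2⟩, rfl⟩ | ⟨t, ⟨h, h2, h3⟩, rfl⟩)
    · rw [good_mid]
      simp [h, h2]
    · rw [good_append]
      refine ⟨⟨h, ?_⟩, ?_⟩
      · intro x hx; have := h3 x hx; omega
      · simp [List.head?_append, h2]

theorem AS_succ (n : ℕ) : {l | Good (n + 3) l} =
    FS (n + 2) ∪ ES (n + 2) ∪ (fun t => (n + 1) :: (n + 2) :: t) '' FS n := by
  ext l
  simp only [FS, ES, Set.mem_ofPred_eq, Set.mem_image, Set.mem_union]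
  constructor
  · intro h
    rcases good_cases _ l h with ⟨t, rfl⟩ | ⟨t, rfl⟩ | ⟨k, t, hk, ht, rfl⟩
    · left; left; exact ⟨h, rfl⟩
    · left; right; exact ⟨h, by simp⟩
    · right
      obtain rfl : k = n + 1 := by omega
      rw [good_mid] at h
      refine ⟨t, ⟨h.1, ?_⟩, rfl⟩
      obtain ⟨c, s, rfl, hc⟩ := good_ex_head h.1
      have := h.2 c (by simp)
      simp; omega
  · rintro ((h | h) | ⟨t, ⟨h, h2⟩, rfl⟩)
    · exact h.1
    · exact h.1
    · rw [good_mid]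
      simp [h, h2]

theorem mid_last {n m : ℕ} {t : List ℕ} (h : Good (n + 1) t) (hm : n < m) (a b : ℕ) :
    (a :: b :: t).getLast? ≠ some m := by
  obtain ⟨s, c, rfl, hc⟩ := good_ex_last h
  simp [List.getLast?_cons]; omega

theorem FS_fin (n : ℕ) : (FS n).Finite := (good_finite (n + 1)).subset fun _ h => h.1
theorem GS_fin (n : ℕ) : (GS n).Finite := (good_finite (n + 2)).subset fun _ h => h.1
theorem ES_fin (n : ℕ) : (ES n).Finite := (good_finite (n + 1)).subset fun _ h => h.1
theorem DS_fin (n : ℕ) : (DS n).Finite := (good_finite (n + 2)).subset fun _ h => h.1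
theorem HS_fin (n : ℕ) : (HS n).Finite := (good_finite (n + 1)).subset fun _ h => h.1

theorem inj_cons (a : ℕ) : Function.Injective (List.cons a) := fun x y h => by simpa using h
theorem inj_cons2 (a b : ℕ) : Function.Injective (fun t => a :: b :: t) :=
  fun x y h => by simpa using h
theorem inj_app (a : ℕ) : Function.Injective (fun t => t ++ [a]) := fun x y h => by simpa using h
theorem inj_ca (a b : ℕ) : Function.Injective (fun t => a :: (t ++ [b])) :=
  fun x y h => by simpa using h

theorem HS_card (n : ℕ) : (HS n).ncard = 1 := by
  induction n using Nat.twoStepInduction with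
  | zero => simp [HS_zero]
  | one => simp [HS_one]
  | more n ih _ => rw [HS_succ, Set.ncard_image_of_injective _ (inj_ca _ _), ih]

theorem FS_card (n : ℕ) : (FS (n + 2)).ncard = (FS (n + 1)).ncard + (GS n).ncard := by
  rw [FS_succ, Set.ncard_image_of_injective _ (inj_cons _), 
    Set.ncard_union_eq _ (FS_fin _) (GS_fin _)]
  rw [Set.disjoint_left]
  rintro l ⟨-, h⟩ ⟨-, h'⟩
  rw [h] at h'; simp at h'

theorem ES_card (n : ℕ) : (ES (n + 2)).ncard = (ES (n + 1)).ncard + 1 := by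
  rw [ES_succ, Set.ncard_image_of_injective _ (inj_app _), 
    Set.ncard_union_eq _ (ES_fin _) (DS_fin _), DS_eq, HS_card]
  rw [Set.disjoint_left]
  rintro l ⟨-, h⟩ ⟨-, h'⟩
  rw [h] at h'; simp at h'

theorem GS_card (n : ℕ) : (GS (n + 1)).ncard = (FS n).ncard + 1 := by
  rw [GS_succ, Set.ncard_union_eq _ ((FS_fin _).image _) ((HS_fin _).image _),
    Set.ncard_image_of_injective _ (inj_app _), Set.ncard_image_of_injective _ (inj_cons2 _ _),
    HS_card]
  rw [Set.disjoint_left]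
  rintro l ⟨t, h, rfl⟩ ⟨s, h', h2⟩
  refine mid_last (m := n + 2) h.1 (by omega) (n + 1) (n + 2) ?_
  simp only at h2
  rw [← h2]; simp

theorem AS_card (n : ℕ) : aCount 2 (n + 3) =
    (FS (n + 2)).ncard + (ES (n + 2)).ncard + (FS n).ncard := by
  rw [aCount_eq_s7, AS_succ, Set.ncard_union_eq _ ((FS_fin _).union (ES_fin _)) ((FS_fin _).image _),
    Set.ncard_image_of_injective _ (inj_cons2 _ _), Set.ncard_union_eq _ (FS_fin _) (ES_fin _)]
  · rw [Set.disjoint_left]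
    rintro l ⟨h, h2⟩ ⟨-, h'⟩
    obtain ⟨t, a, rfl, ha⟩ := good_ex_last h
    have h4 := h.1
    have h5 := good_length h
    rcases t with _ | ⟨c, t⟩
    · simp at h5
    · simp [List.getLast?_cons] at h2 h'; simp [h2, h'] at h4
  · rw [Set.disjoint_left]
    rintro l (⟨-, h⟩ | ⟨-, h⟩) ⟨t, h', rfl⟩
    · simp at h
    · exact mid_last (m := n + 2) h'.1 (by omega) (n + 1) (n + 2) h

theorem a_zero : aCount 2 0 = 1 := by simp [aCount_eq_s7, good_zero]
theorem a_one : aCount 2 1 = 1 := by simp [aCount_eq_s7, good_one]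
theorem a_two : aCount 2 2 = 2 := by
  rw [aCount_eq_s7]
  have : {l | Good 2 l} = {[1, 0], [0, 1]} := by
    ext l; simp [good_two]
  rw [this, Set.ncard_pair (by simp)]


theorem ps_identity (a f e : ℕ → ℕ) (a0 : a 0 = 1) (a1 : a 1 = 1) (a2 : a 2 = 2)
    (f0 : f 0 = 1) (f1 : f 1 = 1) (f2 : f 2 = 2) (e1 : e 1 = 1)
    (fr : ∀ n, f (n + 3) = f (n + 2) + f n + 1) (er : ∀ n, e (n + 2) = e (n + 1) + 1)
    (ar : ∀ n, a (n + 3) = f (n + 2) + e (n + 2) + f n) :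
    (1 - PowerSeries.X) ^ 2 * (1 - PowerSeries.X - PowerSeries.X ^ 3) *
        PowerSeries.mk (fun n => (a n : ℚ)) =
      1 - 2 * PowerSeries.X + 2 * PowerSeries.X ^ 2 - PowerSeries.X ^ 4 - PowerSeries.X ^ 6 ∧
    a 0 = 1 ∧ a 1 = 1 ∧ a 2 = 2 ∧ a 3 = 5 ∧
    a 4 = 8 ∧ a 5 = 12 ∧ a 6 = 18 ∧ a 7 = 26 ∧
    a 8 = 37 ∧ a 9 = 53 ∧ a 10 = 76 ∧ a 11 = 109 := by
  have hrec : ∀ n, a (n + 8) + 3 * a (n + 6) + 2 * a (n + 4) =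
      3 * a (n + 7) + 2 * a (n + 5) + a (n + 3) := by
    intro n
    have h3 := ar n
    have h4 := ar (n + 1)
    have h5 := ar (n + 2)
    have h6 := ar (n + 3)
    have h7 := ar (n + 4)
    have h8 := ar (n + 5)
    have k3 := fr n
    have k4 := fr (n + 1)
    have k5 := fr (n + 2)
    have k6 := fr (n + 3)
    have k7 := fr (n + 4)
    have m3 := er (n + 1)
    have m4 := er (n + 2)
    have m5 := er (n + 3)
    have m6 := er (n + 4)
    have m7 := er (n + 5)
    have m2 := er n
    simp only [add_assoc, Nat.reduceAdd] at h3 h4 h5 h6 h7 h8 k3 k4 k5 k6 k7 m2 m3 m4 m5 m6 m7 ⊢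
    clear fr er ar
    omega
  have ev : ∀ n, e (n + 1) = n + 1 := by
    intro n
    induction n with
    | zero => exact e1
    | succ n ih => rw [er, ih]
  have f3 : f 3 = 4 := by rw [fr 0, f2, f0]
  have f4 : f 4 = 6 := by rw [fr 1, f3, f1]
  have f5 : f 5 = 9 := by rw [fr 2, f4, f2]
  have f6 : f 6 = 14 := by rw [fr 3, f5, f3]
  have f7 : f 7 = 21 := by rw [fr 4, f6, f4]
  have f8 : f 8 = 31 := by rw [fr 5, f7, f5]
  have f9 : f 9 = 46 := by rw [fr 6, f8, f6]
  have f10 : f 10 = 68 := by rw [fr 7, f9, f7]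
  have v3 : a 3 = 5 := by rw [ar 0, f2, ev 1, f0]
  have v4 : a 4 = 8 := by rw [ar 1, f3, ev 2, f1]
  have v5 : a 5 = 12 := by rw [ar 2, f4, ev 3, f2]
  have v6 : a 6 = 18 := by rw [ar 3, f5, ev 4, f3]
  have v7 : a 7 = 26 := by rw [ar 4, f6, ev 5, f4]
  have v8 : a 8 = 37 := by rw [ar 5, f7, ev 6, f5]
  have v9 : a 9 = 53 := by rw [ar 6, f8, ev 7, f6]
  have v10 : a 10 = 76 := by rw [ar 7, f9, ev 8, f7]
  have v11 : a 11 = 109 := by rw [ar 8, f10, ev 9, f8]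
  refine ⟨?_, a0, a1, a2, v3, v4, v5, v6, v7, v8, v9, v10, v11⟩
  have hL : ∀ A : PowerSeries ℚ,
      (1 - PowerSeries.X) ^ 2 * (1 - PowerSeries.X - PowerSeries.X ^ 3) * A =
      A - (PowerSeries.X ^ 1 * A + PowerSeries.X ^ 1 * A + PowerSeries.X ^ 1 * A)
        + (PowerSeries.X ^ 2 * A + PowerSeries.X ^ 2 * A + PowerSeries.X ^ 2 * A)
        - (PowerSeries.X ^ 3 * A + PowerSeries.X ^ 3 * A)
        + (PowerSeries.X ^ 4 * A + PowerSeries.X ^ 4 * A) - PowerSeries.X ^ 5 * A := by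
    intro A; ring
  have hR : (1 - 2 * PowerSeries.X + 2 * PowerSeries.X ^ 2 - PowerSeries.X ^ 4
      - PowerSeries.X ^ 6 : PowerSeries ℚ) =
      PowerSeries.X ^ 0 - (PowerSeries.X ^ 1 + PowerSeries.X ^ 1)
      + (PowerSeries.X ^ 2 + PowerSeries.X ^ 2) - PowerSeries.X ^ 4 - PowerSeries.X ^ 6 := by
    ring
  rw [hL, hR]
  ext n
  simp only [map_add, map_sub, PowerSeries.coeff_X_pow_mul', PowerSeries.coeff_X_pow,
    PowerSeries.coeff_mk]
  rcases lt_or_ge n 8 with hn | hn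
  · interval_cases n <;> norm_num [a0, a1, a2, v3, v4, v5, v6, v7]
  · obtain ⟨m, rfl⟩ := Nat.exists_eq_add_of_le' hn
    have hq : (a (m + 8) : ℚ) + 3 * a (m + 6) + 2 * a (m + 4) =
      3 * a (m + 7) + 2 * a (m + 5) + a (m + 3) := by exact_mod_cast hrec m
    simp only [show m + 8 - 1 = m + 7 by omega, show m + 8 - 2 = m + 6 by omega,
      show m + 8 - 3 = m + 5 by omega, show m + 8 - 4 = m + 4 by omega,
      show m + 8 - 5 = m + 3 by omega, show (1 : ℕ) ≤ m + 8 by omega,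
      show (2 : ℕ) ≤ m + 8 by omega, show (3 : ℕ) ≤ m + 8 by omega,
      show (4 : ℕ) ≤ m + 8 by omega, show (5 : ℕ) ≤ m + 8 by omega,
      show m + 8 ≠ 0 by omega, show m + 8 ≠ 1 by omega, show m + 8 ≠ 2 by omega,
      show m + 8 ≠ 4 by omega, show m + 8 ≠ 6 by omega, if_true, if_false]
    linarith

theorem case_m_eq_two :
    (1 - PowerSeries.X) ^ 2 * (1 - PowerSeries.X - PowerSeries.X ^ 3) * Aps 2 =
      1 - 2 * PowerSeries.X + 2 * PowerSeries.X ^ 2 - PowerSeries.X ^ 4 - PowerSeries.X ^ 6 ∧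
    aCount 2 0 = 1 ∧ aCount 2 1 = 1 ∧ aCount 2 2 = 2 ∧ aCount 2 3 = 5 ∧
    aCount 2 4 = 8 ∧ aCount 2 5 = 12 ∧ aCount 2 6 = 18 ∧ aCount 2 7 = 26 ∧
    aCount 2 8 = 37 ∧ aCount 2 9 = 53 ∧ aCount 2 10 = 76 ∧ aCount 2 11 = 109 := by
  have f0 : (FS 0).ncard = 1 := by simp [FS_zero]
  have f1 : (FS 1).ncard = 1 := by simp [FS_one]
  have g0 : (GS 0).ncard = 1 := by simp [GS_zero]
  have e1 : (ES 1).ncard = 1 := by simp [ES_one]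
  have f2 : (FS 2).ncard = 2 := by
    have := FS_card 0
    simp only [zero_add] at this
    omega
  have fr : ∀ n, (FS (n + 3)).ncard = (FS (n + 2)).ncard + (FS n).ncard + 1 := by
    intro n
    have := FS_card (n + 1)
    rw [GS_card] at this
    simpa [add_assoc] using this
  exact ps_identity (aCount 2) (fun n => (FS n).ncard) (fun n => (ES n).ncard)
    a_zero a_one a_two f0 f1 f2 e1 fr ES_card AS_card
end
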